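/- arXiv:1804.07630 — 2 statements merged into one kernel-verified Lean document; each statement's English description precedes it below -/
import Mathlib

section
/- Let G be a residually finite group having a solvable subgroup of finite index, let Σ be a finite set with a distinguished element 0, and let Σ^G carry the product topology and the shift action (g·x)_h = x_{g⁻¹h}. Let f : Σ^G → Σ^G be a cellular automaton, i.e. a continuous map satisfying f(g·x) = g·f(x) for all g ∈ G and x ∈ Σ^G. If fⁿ(x) → 0^G in the product topology for every x ∈ Σ^G (where 0^G is the configuration that is constantly 0), then there exists n ∈ ℕ such that fⁿ(x) = 0^G for all x ∈ Σ^G. -/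
/-- A group is residually finite if every nontrivial element survives in some finite
quotient. -/
def ResiduallyFinite (H : Type) [Group H] : Prop :=
  ∀ g : H, g ≠ 1 → ∃ (Q : Type) (_ : Group Q) (φ : H →* Q), Finite Q ∧ φ g ≠ 1

/-! Call a configuration mortal if it reaches zero in finite time. By Baire's theorem, for every
finite set there is a pattern whose presence forces the orbit to vanish on that set after a bounded
time. If such a blocking pattern is itself mortal, then superposing it on a configuration which
vanishes on a large enough window changes only finitely many steps of the orbit. Vanishing on the
window therefore protects the finite set forever, and so configurations supported on finitely many
orbits of a subgroup `L` stay confined to finitely many `L`-orbits.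

The mortality of blocking patterns is obtained by repeating them along a normal subgroup `N ≤ L`
avoiding a given finite set of nontrivial elements, which exists by residual finiteness: an
`N`-periodic configuration lives over the quotient by `N`. With `L` the commutator subgroup this is
an induction on the derived length, whose steps only require virtually abelian quotients. For
these, coordinate projections reduce the problem to `ℤ`, where a blocking pattern repeated with
large period builds walls that isolate a single copy of it. Finally, once finitely supported
configurations are mortal, a window protecting a fundamental domain and the compactness of the full
shift give a uniform time.
-/

open Set Function Filter Topology
open scoped Pointwise

/-! ### Configuration spaces and free actions -/

section ConfigurationTopology

variable {Ω A : Type*} [TopologicalSpace A] [DiscreteTopology A]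

theorem mem_nhds_configuration_iff {x : Ω → A} {s : Set (Ω → A)} :
    s ∈ 𝓝 x ↔ ∃ I : Set Ω, I.Finite ∧ ∀ y, EqOn y x I → y ∈ s := by
  simp only [nhds_pi, nhds_discrete, mem_pi_pure, EqOn]

theorem exists_finite_dependsOn [Finite A] {B : Type*} [TopologicalSpace B] [DiscreteTopology B]
    {g : (Ω → A) → B} (hg : Continuous g) : ∃ E : Set Ω, E.Finite ∧ DependsOn g E := by
  suffices h : ∃ E : Set Ω, E.Finite ∧ ∀ x ∈ univ, ∀ y, EqOn x y E → g x = g y by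
    obtain ⟨E, hE, hgE⟩ := h
    exact ⟨E, hE, fun x y hxy => hgE x (mem_univ x) y hxy⟩
  refine isCompact_univ.induction_on ⟨∅, finite_empty, fun x hx => hx.elim⟩ ?_ ?_ ?_
  · rintro s t hst ⟨E, hE, hgE⟩
    exact ⟨E, hE, fun x hx => hgE x (hst hx)⟩
  · rintro s t ⟨E, hE, hgE⟩ ⟨E', hE', hgE'⟩
    refine ⟨E ∪ E', hE.union hE', fun x hx y hxy => ?_⟩
    rcases hx with hx | hx
    · exact hgE x hx y (hxy.mono subset_union_left)
    · exact hgE' x hx y (hxy.mono subset_union_right)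
  · intro x _
    have hconst : g ⁻¹' {g x} ∈ 𝓝 x :=
      hg.continuousAt (mem_nhds_discrete.2 (mem_singleton (g x)))
    obtain ⟨I, hI, hgI⟩ := mem_nhds_configuration_iff.1 hconst
    refine ⟨{y | EqOn y x I}, ?_, I, hI, fun y hy z hyz => ?_⟩
    · exact mem_nhdsWithin_of_mem_nhds (mem_nhds_configuration_iff.2 ⟨I, hI, fun _ => id⟩)
    · exact (hgI y hy).trans (hgI z (hyz.symm.trans hy)).symm

end ConfigurationTopology

theorem exists_mem_nhdsWithin_of_closure_subset_iUnion {X ι : Type*} [TopologicalSpace X]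
    [CompactSpace X] [T2Space X] [Countable ι] {M : Set X} (hM : M.Nonempty) {V : ι → Set X}
    (hV : ∀ i, IsClosed (V i)) (hMV : closure M ⊆ ⋃ i, V i) :
    ∃ x ∈ M, ∃ i, V i ∈ 𝓝[M] x := by
  have : CompactSpace (closure M) := isCompact_iff_compactSpace.1 isClosed_closure.isCompact
  have : Nonempty (closure M) := hM.closure.to_subtype
  obtain ⟨i, z, hz⟩ := nonempty_interior_of_iUnion_of_closed
    (f := fun i => ((↑) : closure M → X) ⁻¹' V i)
    (fun i => (hV i).preimage continuous_subtype_val)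
    (eq_univ_of_forall fun x => by simpa only [mem_iUnion, mem_preimage] using hMV x.2)
  obtain ⟨O, hO, hOV⟩ := isOpen_induced_iff.1 (isOpen_interior (s := ((↑) : closure M → X) ⁻¹' V i))
  have hzO : (z : X) ∈ O := (Set.ext_iff.1 hOV z).2 hz
  obtain ⟨x, hxO, hxM⟩ := mem_closure_iff.1 z.2 O hO hzO
  refine ⟨x, hxM, i, mem_nhdsWithin.2 ⟨O, hO, hxO, fun y ⟨hyO, hyM⟩ => ?_⟩⟩
  exact interior_subset (s := ((↑) : closure M → X) ⁻¹' V i)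
    ((Set.ext_iff.1 hOV ⟨y, subset_closure hyM⟩).1 hyO)

section FreeActions

variable {Γ Ω : Type*} [Group Γ] [MulAction Γ Ω]

/-- The union of the `Γ`-orbits that meet `F`. -/
def saturation (Γ : Type*) {Ω : Type*} [Group Γ] [MulAction Γ Ω] (F : Set Ω) : Set Ω :=
  {ω | ∃ γ : Γ, ∃ s ∈ F, γ • s = ω}

theorem saturation_mono {F F' : Set Ω} (h : F ⊆ F') : saturation Γ F ⊆ saturation Γ F' :=
  fun _ ⟨γ, s, hs, hω⟩ => ⟨γ, s, h hs, hω⟩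

variable (Γ) in
theorem subset_saturation (F : Set Ω) : F ⊆ saturation Γ F :=
  fun ω hω => ⟨1, ω, hω, one_smul Γ ω⟩

theorem smul_mem_saturation_iff {F : Set Ω} {ω : Ω} (γ : Γ) :
    γ • ω ∈ saturation Γ F ↔ ω ∈ saturation Γ F := by
  constructor
  · rintro ⟨δ, s, hs, h⟩
    exact ⟨γ⁻¹ * δ, s, hs, by rw [mul_smul, h, inv_smul_smul]⟩
  · rintro ⟨δ, s, hs, rfl⟩
    exact ⟨γ * δ, s, hs, mul_smul γ δ s⟩

theorem saturation_subset_saturation {F F' : Set Ω} (h : F ⊆ saturation Γ F') :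
    saturation Γ F ⊆ saturation Γ F' := by
  rintro _ ⟨γ, s, hs, rfl⟩
  exact (smul_mem_saturation_iff γ).2 (h hs)

theorem saturation_subgroup_subset (L : Subgroup Γ) (F : Set Ω) :
    saturation L F ⊆ saturation Γ F :=
  fun _ ⟨γ, s, hs, hω⟩ => ⟨γ, s, hs, hω⟩

theorem saturation_bot (F : Set Ω) : saturation (⊥ : Subgroup Γ) F = F := by
  refine Subset.antisymm ?_ (subset_saturation _ F)
  rintro _ ⟨γ, s, hs, rfl⟩
  rwa [Subsingleton.elim γ 1, one_smul]

theorem finite_setOf_smul_mem [IsCancelSMul Γ Ω] {S T : Set Ω} (hS : S.Finite) (hT : T.Finite) :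
    {γ : Γ | ∃ s ∈ S, γ • s ∈ T}.Finite := by
  have hsub : {γ : Γ | ∃ s ∈ S, γ • s ∈ T} ⊆ ⋃ s ∈ S, ⋃ t ∈ T, {γ : Γ | γ • s = t} := by
    rintro γ ⟨s, hs, ht⟩
    exact mem_biUnion hs (mem_biUnion ht rfl)
  refine (hS.biUnion fun s _ => hT.biUnion fun t _ => ?_).subset hsub
  exact Set.Subsingleton.finite fun γ hγ δ hδ =>
    IsCancelSMul.right_cancel γ δ s (Eq.trans hγ (Eq.symm hδ))

end FreeActions

/-! ### Blocking patterns and confinement -/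

/-- A configuration is mortal under `f` if its orbit reaches the zero configuration. -/
def IsMortal {Ω A : Type*} [Zero A] (f : (Ω → A) → (Ω → A)) (x : Ω → A) : Prop :=
  ∃ n, f^[n] x = 0

/-- A cellular automaton over a `Γ`-set all of whose orbits tend to zero pointwise. -/
structure AsymptoticallyNilpotent (Γ : Type*) {Ω A : Type*} [Group Γ] [MulAction Γ Ω] [Zero A]
    [TopologicalSpace A] (f : (Ω → A) → (Ω → A)) : Prop where
  continuous : Continuous f
  equivariant : ∀ γ : Γ, Function.Commute f fun x ω => x (γ • ω)
  tendsto_zero : ∀ x, Tendsto (fun n => f^[n] x) atTop (𝓝 0)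

/-- `P` is blocking for `C` in `M` if every configuration of `M` that agrees with `P` on a certain
finite set eventually vanishes on `C`, at a time depending only on `P`. -/
def IsBlocking {Ω A : Type*} [Zero A] (f : (Ω → A) → (Ω → A)) (M : Set (Ω → A)) (C : Set Ω)
    (P : Ω → A) : Prop :=
  ∃ D : Set Ω, D.Finite ∧ ∃ n₀, ∀ y ∈ M, EqOn y P D → ∀ n ≥ n₀, EqOn (f^[n] y) 0 C

/-- Configurations supported on the orbits of `F` stay supported on the orbits of the finite set
`F'` forever. This is the substitute for finiteness of the support used throughout. -/
structure IsConfined (Γ : Type*) {Ω A : Type*} [Group Γ] [MulAction Γ Ω] [Zero A]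
    (f : (Ω → A) → (Ω → A)) (F F' : Set Ω) : Prop where
  finite : F'.Finite
  subset : F ⊆ F'
  support_iterate_subset : ∀ x, support x ⊆ saturation Γ F →
    ∀ n, support (f^[n] x) ⊆ saturation Γ F'

open Classical in
/-- The configuration `y`, with its zeros replaced by the values of `P`. -/
noncomputable def superpose {Ω A : Type*} [Zero A] (P y : Ω → A) : Ω → A :=
  (support y).piecewise y P

section Superpose

variable {Ω A : Type*} [Zero A] {P y : Ω → A} {ω : Ω}

theorem superpose_of_left_eq_zero (hP : P ω = 0) : superpose P y ω = y ω := by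
  by_cases hy : y ω = 0 <;> simp [superpose, Set.piecewise, hP, hy]

theorem superpose_of_right_eq_zero (hy : y ω = 0) : superpose P y ω = P ω := by
  simp [superpose, Set.piecewise, hy]

theorem support_superpose_subset : support (superpose P y) ⊆ support P ∪ support y := by
  intro ω hω
  by_contra h
  simp only [mem_union, mem_support, not_or, not_not] at h
  exact hω ((superpose_of_left_eq_zero h.1).trans h.2)

end Superpose

namespace IsBlocking

variable {Ω A : Type*} [Zero A] {f : (Ω → A) → (Ω → A)} {M : Set (Ω → A)} {C C' : Set Ω}
  {P : Ω → A}

theorem mono (h : IsBlocking f M C P) (hC : C' ⊆ C) : IsBlocking f M C' P := by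
  obtain ⟨D, hD, n₀, hblock⟩ := h
  exact ⟨D, hD, n₀, fun y hy hyP n hn => (hblock y hy hyP n hn).mono hC⟩

theorem indicator (h : IsBlocking f M C P) :
    ∃ D : Set Ω, D.Finite ∧ IsBlocking f M C (D.indicator P) := by
  obtain ⟨D, hD, n₀, hblock⟩ := h
  exact ⟨D, hD, D, hD, n₀, fun y hy hyP =>
    hblock y hy (hyP.trans fun _ hd => indicator_of_mem hd P)⟩

end IsBlocking

theorem IsConfined.finite_left {Γ Ω A : Type*} [Group Γ] [MulAction Γ Ω] [Zero A]
    {f : (Ω → A) → (Ω → A)} {F F' : Set Ω} (hF : IsConfined Γ f F F') : F.Finite :=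
  hF.finite.subset hF.subset

namespace AsymptoticallyNilpotent

variable {Γ Ω A : Type*} [Group Γ] [MulAction Γ Ω] [Zero A]
  [TopologicalSpace A] {f : (Ω → A) → (Ω → A)}

theorem map_zero [T2Space A] (hf : AsymptoticallyNilpotent Γ f) : f 0 = 0 :=
  isFixedPt_of_tendsto_iterate (hf.tendsto_zero 0) hf.continuous.continuousAt

theorem iterate_zero [T2Space A] (hf : AsymptoticallyNilpotent Γ f) (n : ℕ) : f^[n] 0 = 0 :=
  iterate_fixed hf.map_zero n

theorem iterate_eq_zero_of_le [T2Space A] (hf : AsymptoticallyNilpotent Γ f) {x : Ω → A}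
    {m n : ℕ} (hm : f^[m] x = 0) (hmn : m ≤ n) : f^[n] x = 0 := by
  rw [← Nat.sub_add_cancel hmn, iterate_add_apply, hm, hf.iterate_zero]

theorem isMortal_iterate_iff [T2Space A] (hf : AsymptoticallyNilpotent Γ f) {x : Ω → A} (m : ℕ) :
    IsMortal f (f^[m] x) ↔ IsMortal f x := by
  simp only [IsMortal, ← iterate_add_apply]
  exact ⟨fun ⟨n, hn⟩ => ⟨n + m, hn⟩,
    fun ⟨n, hn⟩ => ⟨n, hf.iterate_eq_zero_of_le hn (Nat.le_add_right n m)⟩⟩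

theorem iterate_comp_smul (hf : AsymptoticallyNilpotent Γ f) (n : ℕ) (γ : Γ) (x : Ω → A) :
    f^[n] (fun ω => x (γ • ω)) = fun ω => f^[n] x (γ • ω) :=
  (hf.equivariant γ).iterate_left n x

variable [DiscreteTopology A]

theorem eventually_eqOn_zero (hf : AsymptoticallyNilpotent Γ f) (x : Ω → A) {C : Set Ω}
    (hC : C.Finite) : ∀ᶠ n in atTop, EqOn (f^[n] x) 0 C := by
  refine (eventually_all_finite hC).2 fun c _ => ?_
  have hc := tendsto_pi_nhds.1 (hf.tendsto_zero x) c
  rwa [nhds_discrete, tendsto_pure] at hc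

theorem isMortal_of_forall_support_subset (hf : AsymptoticallyNilpotent Γ f) {x : Ω → A}
    {C : Set Ω} (hC : C.Finite) (hx : ∀ n, support (f^[n] x) ⊆ C) : IsMortal f x := by
  obtain ⟨n, hn⟩ := (hf.eventually_eqOn_zero x hC).exists
  refine ⟨n, funext fun ω => ?_⟩
  by_cases hω : ω ∈ C
  · exact hn hω
  · exact notMem_support.1 fun h => hω (hx n h)

variable [Finite A]

theorem exists_finite_iterate_congr (hf : AsymptoticallyNilpotent Γ f) {F : Set Ω}
    (hF : F.Finite) (n : ℕ) :
    ∃ E : Set Ω, E.Finite ∧ ∀ (γ : Γ) (x y : Ω → A), (∀ e ∈ E, x (γ • e) = y (γ • e)) →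
      ∀ s ∈ F, f^[n] x (γ • s) = f^[n] y (γ • s) := by
  have := hF.to_subtype
  have hcont : Continuous fun (x : Ω → A) (s : F) => f^[n] x s :=
    continuous_pi fun s => (continuous_apply (s : Ω)).comp (hf.continuous.iterate n)
  obtain ⟨E, hE, hdep⟩ := exists_finite_dependsOn hcont
  refine ⟨E, hE, fun γ x y hxy s hs => ?_⟩
  have heq := congrFun (hdep hxy) ⟨s, hs⟩
  simpa only [hf.iterate_comp_smul] using heq

theorem exists_isBlocking (hf : AsymptoticallyNilpotent Γ f) {M : Set (Ω → A)} (hM : M.Nonempty)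
    {C : Set Ω} (hC : C.Finite) : ∃ P ∈ M, IsBlocking f M C P := by
  let V : ℕ → Set (Ω → A) := fun n₀ => {x | ∀ n ≥ n₀, EqOn (f^[n] x) 0 C}
  have hVclosed : ∀ n₀, IsClosed (V n₀) := fun n₀ => by
    simp only [V, EqOn, ofPred_forall]
    exact isClosed_iInter fun n => isClosed_iInter fun _ => isClosed_iInter fun c =>
      isClosed_iInter fun _ =>
        isClosed_eq ((continuous_apply c).comp (hf.continuous.iterate n)) continuous_const
  obtain ⟨P, hP, n₀, hn₀⟩ := exists_mem_nhdsWithin_of_closure_subset_iUnion hM hVclosed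
    fun x _ => mem_iUnion.2 (eventually_atTop.1 (hf.eventually_eqOn_zero x hC))
  obtain ⟨u, hu, huV⟩ := mem_nhdsWithin_iff_exists_mem_nhds_inter.1 hn₀
  obtain ⟨D, hD, hDu⟩ := mem_nhds_configuration_iff.1 hu
  exact ⟨P, hP, D, hD, n₀, fun y hy hyP => huV ⟨hDu y hyP, hy⟩⟩

/-- The part of a configuration near `γ • F'` sees either the pattern `P` or the configuration `y`,
but not both, when `y` vanishes on a sufficiently large neighbourhood of the support of `P`. -/
theorem exists_finite_iterate_superpose [IsCancelSMul Γ Ω] (hf : AsymptoticallyNilpotent Γ f)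
    (L : Subgroup Γ) {F F' : Set Ω} (hF : IsConfined Γ f F F') {P : Ω → A}
    (hPF : support P ⊆ saturation Γ F) {S : Set Ω} (hS : S.Finite)
    (hPS : support P ⊆ saturation L S) {m : ℕ} (hm : f^[m] P = 0) :
    ∃ W : Set Ω, W.Finite ∧ ∀ y, support y ⊆ saturation Γ F → EqOn y 0 (saturation L W) →
      f^[m] (superpose P y) = f^[m] y := by
  obtain ⟨E, hE, hloc⟩ := hf.exists_finite_iterate_congr hF.finite m
  set Δ : Set Γ := {δ | ∃ e ∈ E, δ • e ∈ S}
  refine ⟨Δ • E, (finite_setOf_smul_mem hE hS).smul hE, fun y hy hyW => funext fun ω => ?_⟩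
  by_cases hω : ω ∈ saturation Γ F'
  · obtain ⟨γ, s, hs, rfl⟩ := hω
    by_cases hmeet : ∃ e ∈ E, γ • e ∈ saturation L S
    · obtain ⟨e, he, l, d, hd, hld⟩ := hmeet
      have hδ : (l : Γ)⁻¹ * γ ∈ Δ := ⟨e, he, by
        rwa [mul_smul, ← hld, Subgroup.smul_def, inv_smul_smul]⟩
      have hy0 : ∀ e ∈ E, y (γ • e) = 0 := fun e he => hyW
        ⟨l, _, smul_mem_smul hδ he, by rw [mul_smul, Subgroup.smul_def, smul_inv_smul]⟩
      calc f^[m] (superpose P y) (γ • s)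
          = f^[m] P (γ • s) :=
            hloc γ _ _ (fun e he => superpose_of_right_eq_zero (hy0 e he)) s hs
        _ = f^[m] 0 (γ • s) := by rw [hm, hf.iterate_zero]
        _ = f^[m] y (γ • s) := (hloc γ _ _ hy0 s hs).symm
    · push Not at hmeet
      exact hloc γ _ _ (fun e he => superpose_of_left_eq_zero
        (notMem_support.1 fun h => hmeet e he (hPS h))) s hs
  · have hsup := support_superpose_subset.trans (union_subset hPF hy)
    rw [notMem_support.1 fun h => hω (hF.support_iterate_subset _ hsup m h),
      notMem_support.1 fun h => hω (hF.support_iterate_subset y hy m h)]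

theorem exists_window [IsCancelSMul Γ Ω] (hf : AsymptoticallyNilpotent Γ f) (L : Subgroup Γ)
    {F F' C : Set Ω} (hF : IsConfined Γ f F F') (hC : C.Finite) {P : Ω → A}
    (hPF : support P ⊆ saturation Γ F) {S : Set Ω} (hS : S.Finite)
    (hPS : support P ⊆ saturation L S) (hP : IsMortal f P) {M : Set (Ω → A)}
    (hMF : ∀ y ∈ M, support y ⊆ saturation Γ F)
    (hM : ∀ y ∈ M, ∀ m, f^[m] (superpose P y) = f^[m] y → superpose P y ∈ M)
    (hblock : IsBlocking f M C P) :
    ∃ W : Set Ω, W.Finite ∧ ∀ y ∈ M, EqOn y 0 (saturation L W) → ∀ n, EqOn (f^[n] y) 0 C := by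
  obtain ⟨m, hm⟩ := hP
  obtain ⟨D, hD, n₀, hDblock⟩ := hblock
  obtain ⟨W, hW, hsuper⟩ := hf.exists_finite_iterate_superpose L hF hPF hS hPS hm
  choose E hE hloc using fun n => hf.exists_finite_iterate_congr hC n
  refine ⟨W ∪ D ∪ ⋃ n ∈ Iio (max m n₀), E n, (hW.union hD).union
    ((finite_Iio _).biUnion fun n _ => hE n), fun y hy hyW n c hc => ?_⟩
  have hy0 : EqOn y 0 (W ∪ D ∪ ⋃ n ∈ Iio (max m n₀), E n) := hyW.mono (subset_saturation L _)
  rcases lt_or_ge n (max m n₀) with hn | hn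
  · have hy1 : EqOn y 0 (E n) :=
      hy0.mono ((subset_biUnion_of_mem (u := E) (mem_Iio.2 hn)).trans subset_union_right)
    have hzero := hloc n 1 y 0 (fun e he => by rw [one_smul]; exact hy1 he) c hc
    rwa [one_smul, hf.iterate_zero] at hzero
  · obtain ⟨hmn, hn₀⟩ := max_le_iff.1 hn
    have hiter : f^[m] (superpose P y) = f^[m] y := hsuper y (hMF y hy)
      (hyW.mono (saturation_mono (subset_union_left.trans subset_union_left)))
    have hagree : EqOn (superpose P y) P D := fun d hd =>
      superpose_of_right_eq_zero (hy0 (Or.inl (Or.inr hd)))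
    have hzero := hDblock _ (hM y hy m hiter) hagree n hn₀ hc
    rwa [← Nat.sub_add_cancel hmn, iterate_add_apply, hiter, ← iterate_add_apply,
      Nat.sub_add_cancel hmn] at hzero

end AsymptoticallyNilpotent

namespace AsymptoticallyNilpotent

variable {Γ Ω A : Type*} [Group Γ] [MulAction Γ Ω] [IsCancelSMul Γ Ω] [Zero A]
  [TopologicalSpace A] {f : (Ω → A) → (Ω → A)} {F F' : Set Ω}

/-- The window can be moved along `Γ`, by equivariance, so it shields every point of the orbits
of `F'` that is far from `K` along `L`. Normality of `L` makes the translates of `L`-saturated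
windows `L`-saturated. -/
theorem exists_isConfined_of_window (hf : AsymptoticallyNilpotent Γ f) (L : Subgroup Γ) [L.Normal]
    (hF : IsConfined Γ f F F') {W : Set Ω} (hW : W.Finite)
    (hwindow : ∀ y, support y ⊆ saturation Γ F → EqOn y 0 (saturation L W) →
      ∀ n, EqOn (f^[n] y) 0 F')
    {K : Set Ω} (hK : K.Finite) (hKF : K ⊆ saturation Γ F) :
    ∃ K', IsConfined L f K K' := by
  set Δ : Set Γ := {δ | ∃ w ∈ W, δ • w ∈ K}
  refine ⟨K ∪ Δ • F', hK.union ((finite_setOf_smul_mem hW hK).smul hF.finite), subset_union_left,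
    fun y hy n ω hω => ?_⟩
  have hyF : support y ⊆ saturation Γ F :=
    hy.trans ((saturation_subgroup_subset L K).trans (saturation_subset_saturation hKF))
  obtain ⟨γ, c, hc, rfl⟩ := hF.support_iterate_subset y hyF n hω
  have hnot : ¬ EqOn (fun ω => y (γ • ω)) 0 (saturation L W) := fun h0 => hω <| by
    have hzero := hwindow _ (fun ω hω => (smul_mem_saturation_iff γ).1 (hyF hω)) h0 n hc
    rwa [hf.iterate_comp_smul] at hzero
  obtain ⟨_, ⟨l, w, hw, rfl⟩, hne⟩ : ∃ ω ∈ saturation L W, y (γ • ω) ≠ 0 := by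
    simpa only [EqOn, not_forall, exists_prop, Pi.zero_apply] using hnot
  obtain ⟨k, e, he, hk⟩ := hy hne
  obtain ⟨l', hγw⟩ : ∃ l' : L, l' • e = γ • w := by
    refine ⟨⟨γ * l * γ⁻¹, ‹L.Normal›.conj_mem _ l.2 γ⟩⁻¹ * k, ?_⟩
    rw [mul_smul, hk, inv_smul_eq_iff]
    simp only [Subgroup.smul_def, smul_smul, inv_mul_cancel_right]
  refine ⟨l', ((l' : Γ)⁻¹ * γ) • c, Or.inr (smul_mem_smul ⟨w, hw, ?_⟩ hc), ?_⟩
  · rwa [mul_smul, ← hγw, Subgroup.smul_def, inv_smul_smul]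
  · rw [mul_smul, Subgroup.smul_def, smul_inv_smul]

variable [Finite A] [DiscreteTopology A]

theorem exists_window_of_isMortal (hf : AsymptoticallyNilpotent Γ f) (hF : IsConfined Γ f F F')
    {C : Set Ω} (hC : C.Finite) :
    ∃ W : Set Ω, W.Finite ∧ ∀ y, support y ⊆ saturation Γ F → (support y).Finite →
      IsMortal f y → EqOn y 0 W → ∀ n, EqOn (f^[n] y) 0 C := by
  set M : Set (Ω → A) := {y | support y ⊆ saturation Γ F ∧ (support y).Finite ∧ IsMortal f y}
  have hM : M.Nonempty := ⟨0, by simp, by simp, 0, rfl⟩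
  obtain ⟨P, ⟨hPF, hPfin, hP⟩, hblock⟩ := hf.exists_isBlocking hM hC
  have hsuper : ∀ y ∈ M, ∀ m, f^[m] (superpose P y) = f^[m] y → superpose P y ∈ M := by
    rintro y ⟨hyF, hyfin, hy⟩ m hm
    refine ⟨support_superpose_subset.trans (union_subset hPF hyF),
      (hPfin.union hyfin).subset support_superpose_subset, ?_⟩
    rwa [← hf.isMortal_iterate_iff m, hm, hf.isMortal_iterate_iff]
  obtain ⟨W, hW, hwindow⟩ := hf.exists_window (⊥ : Subgroup Γ) hF hC hPF hPfin
    (subset_saturation _ _) hP (fun y hy => hy.1) hsuper hblock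
  exact ⟨W, hW, fun y hyF hyfin hy hyW =>
    hwindow y ⟨hyF, hyfin, hy⟩ (by rwa [saturation_bot])⟩

theorem isMortal_of_approximable (hf : AsymptoticallyNilpotent Γ f) (hF : IsConfined Γ f F F')
    {x : Ω → A} (hxF : support x ⊆ saturation Γ F) (hxfin : (support x).Finite)
    (happrox : ∀ E : Set Ω, E.Finite → ∃ y, support y ⊆ saturation Γ F ∧ (support y).Finite ∧
      IsMortal f y ∧ EqOn y x E) : IsMortal f x := by
  obtain ⟨W, hW, hwindow⟩ := hf.exists_window_of_isMortal hF hF.finite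
  set Δ : Set Γ := {γ | ∃ w ∈ W, γ • w ∈ support x}
  have hzero : ∀ n, ∀ γ ∉ Δ, ∀ s ∈ F', f^[n] x (γ • s) = 0 := by
    intro n γ hγ s hs
    obtain ⟨E, hE, hloc⟩ := hf.exists_finite_iterate_congr hF.finite n
    obtain ⟨y, hyF, hyfin, ⟨m, hm⟩, hyx⟩ := happrox (γ • (E ∪ W)) (hE.union hW).smul_set
    have hyx' : ∀ ω ∈ E ∪ W, y (γ • ω) = x (γ • ω) := fun ω hω => hyx (smul_mem_smul_set hω)
    rw [← hloc γ y x (fun e he => hyx' e (Or.inl he)) s hs]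
    have hy0 : EqOn (fun ω => y (γ • ω)) 0 W := fun w hw =>
      (hyx' w (Or.inr hw)).trans (notMem_support.1 fun h => hγ ⟨w, hw, h⟩)
    have hyγ := hwindow (fun ω => y (γ • ω)) (fun ω hω => (smul_mem_saturation_iff γ).1 (hyF hω))
      (hyfin.preimage (MulAction.injective γ).injOn)
      ⟨m, by rw [hf.iterate_comp_smul, hm]; rfl⟩ hy0 n hs
    rwa [hf.iterate_comp_smul] at hyγ
  refine hf.isMortal_of_forall_support_subset
    ((finite_setOf_smul_mem hW hxfin).smul hF.finite : (Δ • F').Finite) fun n ω hω => ?_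
  obtain ⟨γ, s, hs, rfl⟩ := hF.support_iterate_subset x hxF n hω
  exact smul_mem_smul (by_contra fun hγ => hω (hzero n γ hγ s hs)) hs

end AsymptoticallyNilpotent

section OrbitSpaces

open MulAction

variable {Γ Ω : Type*} [Group Γ] [MulAction Γ Ω] (L : Subgroup Γ)

/-- The `L`-orbit of a point, as an element of the orbit space. -/
def orbitClass (ω : Ω) : orbitRel.Quotient L Ω := Quotient.mk _ ω

variable {L} in
theorem orbitClass_eq_iff {ω ω' : Ω} : orbitClass L ω = orbitClass L ω' ↔ ∃ l : L, l • ω' = ω :=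
  Quotient.eq

theorem orbitClass_surjective : Surjective (orbitClass L : Ω → orbitRel.Quotient L Ω) :=
  Quotient.mk_surjective

theorem orbitClass_smul (l : L) (ω : Ω) : orbitClass L (l • ω) = orbitClass L ω :=
  orbitClass_eq_iff.2 ⟨l, rfl⟩

section Normal

variable [L.Normal]

/-- The action of the quotient group on the orbit space of a normal subgroup. -/
instance orbitSpaceAction : MulAction (Γ ⧸ L) (orbitRel.Quotient L Ω) where
  smul := Quotient.map₂ (· • ·) fun γ γ' hγ ω ω' hω => by
    obtain ⟨l, rfl⟩ := hω
    have hm : γ'⁻¹ * γ ∈ L := by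
      simpa only [mul_inv_rev, inv_inv] using L.inv_mem (QuotientGroup.leftRel_apply.1 hγ)
    refine ⟨⟨γ' * (γ'⁻¹ * γ * l) * γ'⁻¹,
      ‹L.Normal›.conj_mem _ (L.mul_mem hm l.2) γ'⟩, ?_⟩
    simp only [Subgroup.smul_def, smul_smul]
    group
  one_smul := Quotient.ind fun ω => congrArg (orbitClass L) (one_smul Γ ω)
  mul_smul := Quotient.ind fun γ => Quotient.ind fun δ => Quotient.ind fun ω =>
    congrArg (orbitClass L) (mul_smul γ δ ω)

instance isCancelSMul_orbitSpace [IsCancelSMul Γ Ω] :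
    IsCancelSMul (Γ ⧸ L) (orbitRel.Quotient L Ω) := by
  refine isCancelSMul_iff_eq_one_of_smul_eq.2 fun γ q hq => ?_
  obtain ⟨γ, rfl⟩ := QuotientGroup.mk_surjective γ
  obtain ⟨ω, rfl⟩ := orbitClass_surjective L q
  obtain ⟨l, hl⟩ := orbitClass_eq_iff.1 hq
  rw [QuotientGroup.eq_one_iff, ← IsCancelSMul.right_cancel (l : Γ) γ ω hl]
  exact l.2

theorem orbitClass_preimage_saturation (F : Set Ω) :
    orbitClass L ⁻¹' saturation (Γ ⧸ L) (orbitClass L '' F) = saturation Γ F := by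
  ext ω
  constructor
  · rintro ⟨γ, _, ⟨s, hs, rfl⟩, h⟩
    obtain ⟨γ, rfl⟩ := QuotientGroup.mk_surjective γ
    obtain ⟨l, hl⟩ := orbitClass_eq_iff.1 h
    exact (smul_mem_saturation_iff (l : Γ)).1 ⟨γ, s, hs, hl.symm⟩
  · rintro ⟨γ, s, hs, rfl⟩
    exact ⟨γ, _, mem_image_of_mem _ hs, rfl⟩

end Normal

/-- The action of an `L`-equivariant map on `L`-periodic configurations, the latter being encoded
as configurations on the orbit space. -/
noncomputable def orbitMap {A : Type*} (f : (Ω → A) → (Ω → A)) (p : orbitRel.Quotient L Ω → A) :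
    orbitRel.Quotient L Ω → A :=
  fun q => f (p ∘ orbitClass L) q.out

variable {A : Type*} [Zero A] [TopologicalSpace A] {f : (Ω → A) → (Ω → A)}

namespace AsymptoticallyNilpotent

theorem semiconj_orbitMap (hf : AsymptoticallyNilpotent Γ f) :
    Semiconj (fun p : orbitRel.Quotient L Ω → A => p ∘ orbitClass L) (orbitMap L f) f := by
  refine fun p => funext fun ω => ?_
  obtain ⟨l, hl⟩ := orbitClass_eq_iff.1 (Quotient.out_eq (orbitClass L ω))
  change f (p ∘ orbitClass L) (orbitClass L ω).out = f (p ∘ orbitClass L) ω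
  rw [← hl]
  have hper : (fun ω => (p ∘ orbitClass L) ((l : Γ) • ω)) = p ∘ orbitClass L :=
    funext fun ω => congrArg p (orbitClass_smul L l ω)
  calc f (p ∘ orbitClass L) (l • ω)
      = f (fun ω => (p ∘ orbitClass L) ((l : Γ) • ω)) ω :=
        (congrFun (hf.equivariant (l : Γ) (p ∘ orbitClass L)) ω).symm
    _ = f (p ∘ orbitClass L) ω := by rw [hper]

theorem isMortal_orbitMap_iff (hf : AsymptoticallyNilpotent Γ f) {p : orbitRel.Quotient L Ω → A} :
    IsMortal (orbitMap L f) p ↔ IsMortal f (p ∘ orbitClass L) := by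
  refine exists_congr fun n => ?_
  rw [← (hf.semiconj_orbitMap L).iterate_right n p]
  exact ((orbitClass_surjective L).injective_comp_right.eq_iff
    (b := (0 : orbitRel.Quotient L Ω → A))).symm

variable [L.Normal]

protected theorem orbitMap (hf : AsymptoticallyNilpotent Γ f) :
    AsymptoticallyNilpotent (Γ ⧸ L) (orbitMap L f) where
  continuous := continuous_pi fun q => (continuous_apply q.out).comp <|
    hf.continuous.comp <| continuous_pi fun ω => continuous_apply (orbitClass L ω)
  equivariant γ p := by
    obtain ⟨γ, rfl⟩ := QuotientGroup.mk_surjective γ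
    refine (orbitClass_surjective L).injective_comp_right ?_
    calc orbitMap L f (fun q => p ((γ : Γ ⧸ L) • q)) ∘ orbitClass L
        = f fun ω => (p ∘ orbitClass L) (γ • ω) := hf.semiconj_orbitMap L _
      _ = fun ω => f (p ∘ orbitClass L) (γ • ω) := hf.equivariant γ _
      _ = fun ω => (orbitMap L f p ∘ orbitClass L) (γ • ω) :=
        funext fun ω => (congrFun (hf.semiconj_orbitMap L p) (γ • ω)).symm
  tendsto_zero p := by
    refine tendsto_pi_nhds.2 fun q => ?_
    obtain ⟨ω, rfl⟩ := orbitClass_surjective L q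
    have hω := tendsto_pi_nhds.1 (hf.tendsto_zero (p ∘ orbitClass L)) ω
    exact hω.congr fun n => (congrFun ((hf.semiconj_orbitMap L).iterate_right n p) ω).symm

end AsymptoticallyNilpotent

variable {L} in
protected theorem IsConfined.orbitMap [L.Normal] (hf : AsymptoticallyNilpotent Γ f) {F F' : Set Ω}
    (hF : IsConfined Γ f F F') :
    IsConfined (Γ ⧸ L) (orbitMap L f) (orbitClass L '' F) (orbitClass L '' F') where
  finite := hF.finite.image _
  subset := image_mono hF.subset
  support_iterate_subset p hp n := by
    have hpF : support (p ∘ orbitClass L) ⊆ saturation Γ F := by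
      rw [support_comp_eq_preimage, ← orbitClass_preimage_saturation L]
      exact preimage_mono hp
    have hn := hF.support_iterate_subset _ hpF n
    rwa [← (hf.semiconj_orbitMap L).iterate_right n p, support_comp_eq_preimage,
      ← orbitClass_preimage_saturation L, (orbitClass_surjective L).preimage_subset_preimage_iff]
      at hn

end OrbitSpaces

/-! ### Mortality of periodic configurations -/

section Periodization

variable {Γ Ω : Type*} [Group Γ] [MulAction Γ Ω]

theorem orbitClass_preimage_image (N : Subgroup Γ) (F : Set Ω) :
    orbitClass N ⁻¹' (orbitClass N '' F) = saturation N F := by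
  ext ω
  simp only [mem_preimage, mem_image, eq_comm (b := orbitClass N ω), orbitClass_eq_iff]
  exact ⟨fun ⟨s, hs, l, hl⟩ => ⟨l, s, hs, hl⟩, fun ⟨l, s, hs, hl⟩ => ⟨s, hs, l, hl⟩⟩

theorem injOn_orbitClass {N : Subgroup Γ} {D : Set Ω}
    (hN : {γ : Γ | ∃ d ∈ D, γ • d ∈ D} ∩ N ⊆ {1}) : InjOn (orbitClass N) D := by
  intro d hd d' hd' h
  obtain ⟨l, rfl⟩ := orbitClass_eq_iff.1 h
  have hl : (l : Γ) = 1 := hN ⟨⟨d', hd', hd⟩, l.2⟩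
  rw [Subgroup.smul_def, hl, one_smul]

theorem exists_periodic_eqOn {A : Type*} [Zero A] {N : Subgroup Γ} {D : Set Ω} (hD : D.Finite)
    (hN : {γ : Γ | ∃ d ∈ D, γ • d ∈ D} ∩ N ⊆ {1}) (x : Ω → A) :
    ∃ p : MulAction.orbitRel.Quotient N Ω → A, (support p).Finite ∧
      support (p ∘ orbitClass N) ⊆ saturation N (D ∩ support x) ∧ EqOn (p ∘ orbitClass N) x D := by
  set p := extend (fun d : D => orbitClass N (d : Ω)) (fun d => x d) 0
  have hvalue : ∀ d ∈ D, p (orbitClass N d) = x d :=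
    fun d hd => (injOn_orbitClass hN).injective.extend_apply _ _ ⟨d, hd⟩
  have hsupport : support p ⊆ orbitClass N '' (D ∩ support x) := by
    intro q hq
    obtain ⟨⟨d, hd⟩, rfl⟩ : ∃ d : D, orbitClass N (d : Ω) = q := by
      by_contra hnot
      exact hq (extend_apply' _ _ _ hnot)
    rw [mem_support, hvalue d hd] at hq
    exact mem_image_of_mem _ ⟨hd, hq⟩
  refine ⟨p, ((hD.inter_of_left _).image _).subset hsupport, ?_, hvalue⟩
  rw [support_comp_eq_preimage, ← orbitClass_preimage_image]
  exact preimage_mono hsupport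

/-- A blocking pattern repeated along `N` is itself blocking. Being `L`-saturated, its mortality
yields a window that is far from a given finite set only along `L`. -/
theorem AsymptoticallyNilpotent.exists_isConfined_of_isMortal_periodic {A : Type*} [Zero A]
    [Finite A] [TopologicalSpace A] [DiscreteTopology A] [IsCancelSMul Γ Ω]
    {f : (Ω → A) → (Ω → A)} (hf : AsymptoticallyNilpotent Γ f) (L : Subgroup Γ) [L.Normal]
    {F F' : Set Ω} (hF : IsConfined Γ f F F')
    (hper : ∀ E : Set Γ, E.Finite → ∃ N ≤ L, E ∩ N ⊆ {1} ∧
      ∀ p : MulAction.orbitRel.Quotient N Ω → A, (support p).Finite →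
        support (p ∘ orbitClass N) ⊆ saturation Γ F → IsMortal f (p ∘ orbitClass N))
    {K : Set Ω} (hK : K.Finite) (hKF : K ⊆ saturation Γ F) : ∃ K', IsConfined L f K K' := by
  set M : Set (Ω → A) := {y | support y ⊆ saturation Γ F} with hM
  obtain ⟨P, hPF, D, hD, n₀, hblock⟩ :=
    hf.exists_isBlocking (M := M) ⟨0, by simp [hM]⟩ hF.finite
  obtain ⟨N, hNL, hND, hmortal⟩ := hper _ (finite_setOf_smul_mem hD hD)
  obtain ⟨p, hpfin, hpD, hpP⟩ := exists_periodic_eqOn hD hND P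
  have hpF : support (p ∘ orbitClass N) ⊆ saturation Γ F :=
    hpD.trans <| (saturation_subgroup_subset N _).trans <|
      saturation_subset_saturation (inter_subset_right.trans hPF)
  have hpL : support (p ∘ orbitClass N) ⊆ saturation L D := fun ω hω => by
    obtain ⟨l, d, hd, hl⟩ := hpD hω
    exact ⟨⟨l, hNL l.2⟩, d, hd.1, hl⟩
  have hpmortal := hmortal p hpfin hpF
  obtain ⟨W, hW, hwindow⟩ := hf.exists_window L hF hF.finite hpF hD hpL hpmortal
    (M := M) (fun y hy => hy)
    (fun y hy _ _ => support_superpose_subset.trans (union_subset hpF hy))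
    ⟨D, hD, n₀, fun y hy hyp => hblock y hy (hyp.trans hpP)⟩
  exact hf.exists_isConfined_of_window L hF hW hwindow hK hKF

end Periodization

/-- Finitely supported configurations are mortal whenever the orbits that carry them are confined
twice in a row. Unlike `HasConfinedMortality`, this concerns only finitely many orbits and hence is
inherited from finitely generated subgroups. -/
def HasTwoStepMortality (Γ : Type) [Group Γ] : Prop :=
  ∀ (Ω A : Type) [MulAction Γ Ω] [IsCancelSMul Γ Ω] [Zero A] [Finite A] [TopologicalSpace A]
    [DiscreteTopology A] (f : (Ω → A) → (Ω → A)), AsymptoticallyNilpotent Γ f →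
    ∀ F₀ F₁ F₂ : Set Ω, IsConfined Γ f F₀ F₁ → IsConfined Γ f F₁ F₂ →
    ∀ x, support x ⊆ saturation Γ F₀ → (support x).Finite → IsMortal f x

/-- Finitely supported configurations are mortal whenever every finite set of orbits is
confined. -/
def HasConfinedMortality (Γ : Type) [Group Γ] : Prop :=
  ∀ (Ω A : Type) [MulAction Γ Ω] [IsCancelSMul Γ Ω] [Zero A] [Finite A] [TopologicalSpace A]
    [DiscreteTopology A] (f : (Ω → A) → (Ω → A)), AsymptoticallyNilpotent Γ f →
    (∀ F : Set Ω, F.Finite → ∃ F', IsConfined Γ f F F') →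
    ∀ x, (support x).Finite → IsMortal f x

section MortalityPredicates

variable {Γ : Type} [Group Γ]

theorem HasTwoStepMortality.hasConfinedMortality (h : HasTwoStepMortality Γ) :
    HasConfinedMortality Γ := by
  intro Ω A _ _ _ _ _ _ f hf hconf x hx
  obtain ⟨F₁, hF₁⟩ := hconf _ hx
  obtain ⟨F₂, hF₂⟩ := hconf F₁ hF₁.finite
  exact h Ω A f hf _ F₁ F₂ hF₁ hF₂ x (subset_saturation Γ _) hx

variable {Ω A : Type} [MulAction Γ Ω] [IsCancelSMul Γ Ω] [Zero A] [Finite A] [TopologicalSpace A]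
  [DiscreteTopology A] {f : (Ω → A) → (Ω → A)} {N : Subgroup Γ} [N.Normal]

theorem HasTwoStepMortality.isMortal_periodic (h : HasTwoStepMortality (Γ ⧸ N))
    (hf : AsymptoticallyNilpotent Γ f) {F₀ F₁ F₂ : Set Ω} (h₀ : IsConfined Γ f F₀ F₁)
    (h₁ : IsConfined Γ f F₁ F₂) (p : MulAction.orbitRel.Quotient N Ω → A)
    (hp : (support p).Finite) (hpF : support (p ∘ orbitClass N) ⊆ saturation Γ F₀) :
    IsMortal f (p ∘ orbitClass N) := by
  refine (hf.isMortal_orbitMap_iff N).1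
    (h _ A _ (hf.orbitMap N) _ _ _ (h₀.orbitMap hf) (h₁.orbitMap hf) p ?_ hp)
  rwa [← (orbitClass_surjective N).preimage_subset_preimage_iff, orbitClass_preimage_saturation,
    ← support_comp_eq_preimage]

theorem HasConfinedMortality.isMortal_periodic (h : HasConfinedMortality (Γ ⧸ N))
    (hf : AsymptoticallyNilpotent Γ f) (hconf : ∀ F : Set Ω, F.Finite → ∃ F', IsConfined Γ f F F')
    (p : MulAction.orbitRel.Quotient N Ω → A) (hp : (support p).Finite) :
    IsMortal f (p ∘ orbitClass N) := by
  refine (hf.isMortal_orbitMap_iff N).1 (h _ A _ (hf.orbitMap N) (fun F hF => ?_) p hp)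
  obtain ⟨F', hF'⟩ := hconf (Quotient.out '' F) (hF.image _)
  have himage : orbitClass N '' (Quotient.out '' F) = F := by
    rw [image_image]
    exact (image_congr fun q _ => Quotient.out_eq q).trans (image_id F)
  exact ⟨_, himage ▸ hF'.orbitMap hf⟩

end MortalityPredicates

/-! ### Change of group -/

section ChangeOfGroup

theorem exists_finite_range_mul {Λ Γ : Type*} [Group Λ] [Group Γ] (φ : Λ →* Γ)
    [φ.range.FiniteIndex] : ∃ R : Set Γ, R.Finite ∧ 1 ∈ R ∧ ∀ γ, ∃ l, ∃ r ∈ R, φ l * r = γ := by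
  refine ⟨insert 1 (range fun q : Γ ⧸ φ.range => q.out⁻¹), (finite_range _).insert 1,
    mem_insert 1 _, fun γ => ?_⟩
  obtain ⟨⟨_, l, rfl⟩, hl⟩ := QuotientGroup.mk_out_eq_mul φ.range γ⁻¹
  refine ⟨l, _, Or.inr ⟨(γ⁻¹ : Γ), rfl⟩, ?_⟩
  simp only [hl, mul_inv_rev, inv_inv, mul_inv_cancel_left]

variable {Λ Γ Ω : Type*} [Group Λ] [Group Γ] [MulAction Λ Ω] [MulAction Γ Ω] {φ : Λ →* Γ}

theorem saturation_smul_eq (hφ : ∀ l (ω : Ω), l • ω = φ l • ω) {R : Set Γ}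
    (hR : ∀ γ, ∃ l, ∃ r ∈ R, φ l * r = γ) (F : Set Ω) :
    saturation Λ (R • F) = saturation Γ F := by
  ext ω
  constructor
  · rintro ⟨l, _, ⟨r, _, s, hs, rfl⟩, rfl⟩
    exact ⟨φ l * r, s, hs, by rw [mul_smul, hφ]⟩
  · rintro ⟨γ, s, hs, rfl⟩
    obtain ⟨l, r, hr, rfl⟩ := hR γ
    exact ⟨l, r • s, smul_mem_smul hr hs, by rw [mul_smul, hφ]⟩

variable {A : Type*} [Zero A] {f : (Ω → A) → (Ω → A)}

theorem IsConfined.mono_left {F₀ F F' : Set Ω} (hF : IsConfined Γ f F F') (h : F₀ ⊆ F) :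
    IsConfined Γ f F₀ F' where
  finite := hF.finite
  subset := h.trans hF.subset
  support_iterate_subset x hx := hF.support_iterate_subset x (hx.trans (saturation_mono h))

theorem IsConfined.of_hom (hφ : ∀ l (ω : Ω), l • ω = φ l • ω) {R : Set Γ} (hRfin : R.Finite)
    (hR : ∀ γ, ∃ l, ∃ r ∈ R, φ l * r = γ) {F F' : Set Ω} (hF : IsConfined Γ f F F') :
    IsConfined Λ f (R • F) (R • F') where
  finite := hRfin.smul hF.finite
  subset := smul_subset_smul_left hF.subset
  support_iterate_subset := by
    simpa only [saturation_smul_eq hφ hR] using hF.support_iterate_subset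

theorem AsymptoticallyNilpotent.of_hom [TopologicalSpace A]
    (hφ : ∀ l (ω : Ω), l • ω = φ l • ω) (hf : AsymptoticallyNilpotent Γ f) :
    AsymptoticallyNilpotent Λ f where
  continuous := hf.continuous
  equivariant l := by simpa only [hφ] using hf.equivariant (φ l)
  tendsto_zero := hf.tendsto_zero

theorem isCancelSMul_of_hom [IsCancelSMul Γ Ω] (hφ : ∀ l (ω : Ω), l • ω = φ l • ω)
    (hinj : Injective φ) : IsCancelSMul Λ Ω :=
  isCancelSMul_iff_eq_one_of_smul_eq.2 fun l ω hl => hinj <| by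
    rw [map_one]
    exact isCancelSMul_iff_eq_one_of_smul_eq.1 ‹_› (φ l) ω (hφ l ω ▸ hl)

end ChangeOfGroup

section FiniteIndex

variable {Λ Γ : Type} [Group Λ] [Group Γ]

theorem HasTwoStepMortality.of_injective (h : HasTwoStepMortality Λ) {φ : Λ →* Γ}
    (hinj : Injective φ) [φ.range.FiniteIndex] : HasTwoStepMortality Γ := by
  intro Ω A _ _ _ _ _ _ f hf F₀ F₁ F₂ h₀ h₁ x hx hxfin
  let _ := MulAction.compHom Ω φ
  have hφ : ∀ l (ω : Ω), l • ω = φ l • ω := fun _ _ => rfl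
  have := isCancelSMul_of_hom hφ hinj
  obtain ⟨R, hRfin, -, hR⟩ := exists_finite_range_mul φ
  exact h Ω A f (hf.of_hom hφ) _ _ _ (h₀.of_hom hφ hRfin hR) (h₁.of_hom hφ hRfin hR) x
    (by rwa [saturation_smul_eq hφ hR]) hxfin

theorem HasConfinedMortality.of_finiteIndex {H : Subgroup Γ} [H.FiniteIndex]
    (h : HasConfinedMortality H) : HasConfinedMortality Γ := by
  intro Ω A _ _ _ _ _ _ f hf hconf x hx
  have hφ : ∀ (l : H) (ω : Ω), l • ω = H.subtype l • ω := fun _ _ => rfl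
  have : H.subtype.range.FiniteIndex := by rwa [H.range_subtype]
  obtain ⟨R, hRfin, hR1, hR⟩ := exists_finite_range_mul H.subtype
  refine h Ω A f (hf.of_hom hφ) (fun F hF => ?_) x hx
  obtain ⟨F', hF'⟩ := hconf F hF
  exact ⟨R • F', (hF'.of_hom hφ hRfin hR).mono_left fun ω hω => ⟨1, hR1, ω, hω, one_smul Γ ω⟩⟩

end FiniteIndex

section FinitelyGenerated

theorem IsConfined.exists_finite_subset_subgroup {Γ Ω A : Type*} [Group Γ] [MulAction Γ Ω]
    [IsCancelSMul Γ Ω] [Zero A] [Finite A] [TopologicalSpace A] [DiscreteTopology A]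
    {f : (Ω → A) → (Ω → A)} (hf : AsymptoticallyNilpotent Γ f) {F F' : Set Ω}
    (hF : IsConfined Γ f F F') :
    ∃ Δ : Set Γ, Δ.Finite ∧ ∀ M : Subgroup Γ, Δ ⊆ M → IsConfined M f F F' := by
  obtain ⟨E, hE, hloc⟩ := hf.exists_finite_iterate_congr hF.finite 1
  refine ⟨_, finite_setOf_smul_mem hE hF.finite, fun M hM => ⟨hF.finite, hF.subset, ?_⟩⟩
  intro x hx n
  induction n with
  | zero => exact hx.trans (saturation_mono hF.subset)
  | succ n ih =>
    intro ω hω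
    obtain ⟨γ, s, hs, rfl⟩ :=
      hF.support_iterate_subset x (hx.trans (saturation_subgroup_subset M F)) (n + 1) hω
    rw [mem_support, iterate_succ_apply'] at hω
    obtain ⟨e, he, hxe⟩ : ∃ e ∈ E, f^[n] x (γ • e) ≠ 0 := by
      by_contra! hzero
      exact hω ((hloc γ _ 0 hzero s hs).trans (congrFun hf.map_zero _))
    obtain ⟨m, t, ht, hmt⟩ := ih hxe
    have hmγ : (m : Γ)⁻¹ * γ ∈ M :=
      hM ⟨e, he, by rwa [mul_smul, ← hmt, Subgroup.smul_def, inv_smul_smul]⟩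
    exact ⟨⟨γ, (M.mul_mem_cancel_left (M.inv_mem m.2)).1 hmγ⟩, s, hs, rfl⟩

theorem HasTwoStepMortality.of_forall_fg {Γ : Type} [Group Γ]
    (h : ∀ M : Subgroup Γ, M.FG → HasTwoStepMortality M) : HasTwoStepMortality Γ := by
  intro Ω A _ _ _ _ _ _ f hf F₀ F₁ F₂ h₀ h₁ x hx hxfin
  obtain ⟨Δ₀, hΔ₀, hM₀⟩ := h₀.exists_finite_subset_subgroup hf
  obtain ⟨Δ₁, hΔ₁, hM₁⟩ := h₁.exists_finite_subset_subgroup hf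
  set Δ : Set Γ := {γ | ∃ s ∈ F₀, γ • s ∈ support x}
  have hΔ : Δ.Finite := finite_setOf_smul_mem h₀.finite_left hxfin
  set M := Subgroup.closure (Δ ∪ (Δ₀ ∪ Δ₁))
  have hM : Δ ∪ (Δ₀ ∪ Δ₁) ⊆ M := Subgroup.subset_closure
  have hMfg : M.FG := (Subgroup.fg_iff M).2 ⟨_, rfl, hΔ.union (hΔ₀.union hΔ₁)⟩
  refine h M hMfg Ω A f (hf.of_hom (φ := M.subtype) fun _ _ => rfl) F₀ F₁ F₂
    (hM₀ M ((subset_union_left.trans subset_union_right).trans hM))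
    (hM₁ M ((subset_union_right.trans subset_union_right).trans hM)) x (fun ω hω => ?_) hxfin
  obtain ⟨γ, s, hs, rfl⟩ := hx hω
  exact ⟨⟨γ, hM (Or.inl ⟨s, hs, hω⟩)⟩, s, hs, rfl⟩

end FinitelyGenerated

section Extensions

theorem orbit_inter_iInter_orbit_subset {Γ Ω : Type*} [Group Γ] [MulAction Γ Ω] [IsCancelSMul Γ Ω]
    {ι : Type*} (L : ι → Subgroup Γ) (ω : Ω) :
    MulAction.orbit Γ ω ∩ ⋂ i, MulAction.orbit (L i) ω ⊆
      MulAction.orbit (⨅ i, L i : Subgroup Γ) ω := by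
  rintro _ ⟨⟨γ, rfl⟩, hγ⟩
  refine ⟨⟨γ, Subgroup.mem_iInf.2 fun i => ?_⟩, rfl⟩
  obtain ⟨l, hl⟩ := mem_iInter.1 hγ i
  rw [← IsCancelSMul.right_cancel (l : Γ) γ ω hl]
  exact l.2

theorem finite_saturation_inter_iInter {Γ Ω : Type*} [Group Γ] [MulAction Γ Ω] [IsCancelSMul Γ Ω]
    {ι : Type*} [Finite ι] (L : ι → Subgroup Γ) [Finite (⨅ i, L i : Subgroup Γ)] {F : Set Ω}
    (hF : F.Finite) {K : ι → Set Ω} (hK : ∀ i, (K i).Finite) :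
    (saturation Γ F ∩ ⋂ i, saturation (L i) (K i)).Finite := by
  have horbits : ∀ s, ∀ k : ι → Ω,
      (MulAction.orbit Γ s ∩ ⋂ i, MulAction.orbit (L i) (k i)).Finite := by
    intro s k
    rcases (MulAction.orbit Γ s ∩ ⋂ i, MulAction.orbit (L i) (k i)).eq_empty_or_nonempty with
      hempty | ⟨ω, hω, hωL⟩
    · exact hempty ▸ finite_empty
    · rw [← MulAction.orbit_eq_iff.2 hω,
        ← iInter_congr fun i => MulAction.orbit_eq_iff.2 (mem_iInter.1 hωL i)]
      exact (finite_range _).subset (orbit_inter_iInter_orbit_subset L ω)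
  refine (hF.biUnion fun s _ => (Finite.pi' hK).biUnion fun k _ => horbits s k).subset ?_
  rintro ω ⟨⟨γ, s, hs, hγ⟩, hωK⟩
  choose l k hk hl using mem_iInter.1 hωK
  exact mem_biUnion hs (mem_biUnion hk ⟨⟨γ, hγ⟩, mem_iInter.2 fun i => ⟨l i, hl i⟩⟩)

variable {Γ : Type} [Group Γ]

theorem HasTwoStepMortality.of_forall_quotient {ι : Type*} [Finite ι] (L : ι → Subgroup Γ)
    [∀ i, (L i).Normal] [Finite (⨅ i, L i : Subgroup Γ)]
    (h : ∀ i, ∀ E : Set Γ, E.Finite → ∃ (N : Subgroup Γ) (_ : N.Normal), N ≤ L i ∧ E ∩ N ⊆ {1} ∧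
      HasTwoStepMortality (Γ ⧸ N)) : HasTwoStepMortality Γ := by
  intro Ω A _ _ _ _ _ _ f hf F₀ F₁ F₂ h₀ h₁ x hx hxfin
  have hconf : ∀ i, ∃ K', IsConfined (L i) f (support x) K' := fun i => by
    refine hf.exists_isConfined_of_isMortal_periodic (L i) h₀ (fun E hE => ?_) hxfin hx
    obtain ⟨N, _, hNL, hNE, hN⟩ := h i E hE
    exact ⟨N, hNL, hNE, hN.isMortal_periodic hf h₀ h₁⟩
  choose K hK using hconf
  refine hf.isMortal_of_forall_support_subset
    (finite_saturation_inter_iInter L h₀.finite fun i => (hK i).finite) fun n => ?_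
  exact subset_inter (h₀.support_iterate_subset x hx n) <| subset_iInter fun i =>
    (hK i).support_iterate_subset x (subset_saturation _ _) n

theorem HasConfinedMortality.of_normal {L : Subgroup Γ} [L.Normal] (hL : HasConfinedMortality L)
    (h : ∀ E : Set Γ, E.Finite → ∃ (N : Subgroup Γ) (_ : N.Normal), N ≤ L ∧ E ∩ N ⊆ {1} ∧
      HasConfinedMortality (Γ ⧸ N)) : HasConfinedMortality Γ := by
  intro Ω A _ _ _ _ _ _ f hf hconf x hx
  refine hL Ω A f (hf.of_hom (φ := L.subtype) fun _ _ => rfl) (fun K hK => ?_) x hx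
  obtain ⟨F', hF'⟩ := hconf K hK
  refine hf.exists_isConfined_of_isMortal_periodic L hF' (fun E hE => ?_) hK (subset_saturation Γ K)
  obtain ⟨N, _, hNL, hNE, hN⟩ := h E hE
  exact ⟨N, hNL, hNE, fun p hp _ => hN.isMortal_periodic hf hconf p hp⟩

end Extensions

theorem IsConfined.finite_support_iterate {Γ Ω A : Type*} [Group Γ] [MulAction Γ Ω]
    [IsCancelSMul Γ Ω] [Zero A] [Finite A] [TopologicalSpace A] [DiscreteTopology A]
    {f : (Ω → A) → (Ω → A)} (hf : AsymptoticallyNilpotent Γ f) {F F' : Set Ω}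
    (hF : IsConfined Γ f F F') {x : Ω → A} (hxF : support x ⊆ saturation Γ F)
    (hx : (support x).Finite) (n : ℕ) : (support (f^[n] x)).Finite := by
  obtain ⟨E, hE, hloc⟩ := hf.exists_finite_iterate_congr hF.finite n
  refine ((finite_setOf_smul_mem (Γ := Γ) hE hx).smul hF.finite).subset fun ω hω => ?_
  obtain ⟨γ, s, hs, rfl⟩ := hF.support_iterate_subset x hxF n hω
  refine smul_mem_smul ?_ hs
  by_contra! hγ
  refine hω ((hloc γ x 0 (fun e he => ?_) s hs).trans (congrFun (hf.iterate_zero n) _))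
  exact notMem_support.1 fun h => hγ ⟨e, he, h⟩

/-- If the evolution of `w` vanishes wherever the boundary of `B` can be seen, then the inside and
the outside of `B` do not interact. -/
theorem IsConfined.iterate_indicator {Γ Ω A : Type*} [Group Γ] [MulAction Γ Ω]
    [Zero A] [TopologicalSpace A] [T2Space A] {f : (Ω → A) → (Ω → A)}
    (hf : AsymptoticallyNilpotent Γ f) {F F' E : Set Ω} (hF : IsConfined Γ f F F')
    (hE : ∀ (γ : Γ) (x y : Ω → A), (∀ e ∈ E, x (γ • e) = y (γ • e)) →
      ∀ s ∈ F', f x (γ • s) = f y (γ • s))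
    {w : Ω → A} (hw : support w ⊆ saturation Γ F) {B : Set Ω}
    (hB : ∀ γ : Γ, ∀ s ∈ F', ∀ e ∈ E, (γ • e ∈ B ↔ γ • s ∈ B) ∨ ∀ n, f^[n] w (γ • e) = 0)
    (n : ℕ) : f^[n] (B.indicator w) = B.indicator (f^[n] w) := by
  induction n with
  | zero => rfl
  | succ n ih =>
    funext ω
    by_cases hω : ω ∈ saturation Γ F'
    · obtain ⟨γ, s, hs, rfl⟩ := hω
      rw [iterate_succ_apply', ih]
      by_cases hsB : γ • s ∈ B
      · rw [indicator_of_mem hsB, iterate_succ_apply']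
        refine hE γ _ _ (fun e he => ?_) s hs
        rcases hB γ s hs e he with heB | hzero
        · exact indicator_of_mem (heB.2 hsB) _
        · rw [indicator_apply_eq_zero.2 fun _ => hzero n, hzero n]
      · rw [indicator_of_notMem hsB]
        refine (hE γ _ 0 (fun e he => ?_) s hs).trans (congrFun hf.map_zero _)
        exact indicator_apply_eq_zero.2 fun heB =>
          (hB γ s hs e he).elim (fun h => absurd (h.1 heB) hsB) fun hzero => hzero n
    · have hsupport : support (B.indicator w) ⊆ saturation Γ F :=
        support_indicator.trans_subset (inter_subset_right.trans hw)
      rw [notMem_support.1 fun h => hω (hF.support_iterate_subset _ hsupport (n + 1) h),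
        indicator_apply_eq_zero.2 fun _ =>
          notMem_support.1 fun h => hω (hF.support_iterate_subset w hw (n + 1) h)]

theorem exists_map_smul_eq_mul (Γ Ω : Type*) [Group Γ] [MulAction Γ Ω] [IsCancelSMul Γ Ω] :
    ∃ c : Ω → Γ, ∀ γ ω, c (γ • ω) = γ * c ω := by
  have hout : ∀ ω : Ω, ∃ γ : Γ,
      γ • (Quotient.mk (MulAction.orbitRel Γ Ω) ω).out = ω := fun ω =>
    (MulAction.orbitRel Γ Ω).symm (Quotient.mk_out (s := MulAction.orbitRel Γ Ω) ω)
  choose c hc using hout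
  refine ⟨c, fun γ ω => IsCancelSMul.right_cancel _ _
    (Quotient.mk (MulAction.orbitRel Γ Ω) ω).out ?_⟩
  have hclass : Quotient.mk (MulAction.orbitRel Γ Ω) (γ • ω) = Quotient.mk _ ω :=
    Quotient.sound ⟨γ, rfl⟩
  rw [mul_smul, hc ω, ← hclass, hc]

theorem finite_saturation_inter_preimage {Γ Ω : Type*} [Group Γ] [MulAction Γ Ω] {c : Ω → Γ}
    (hc : ∀ γ ω, c (γ • ω) = γ * c ω) {F : Set Ω} (hF : F.Finite) {Q : Set Γ} (hQ : Q.Finite) :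
    (saturation Γ F ∩ c ⁻¹' Q).Finite := by
  refine ((hQ.div (hF.image c)).smul hF).subset ?_
  rintro _ ⟨⟨γ, s, hs, rfl⟩, hγ⟩
  refine smul_mem_smul ⟨_, hγ, c s, mem_image_of_mem c hs, ?_⟩ hs
  change c (γ • s) / c s = γ
  rw [hc, mul_div_cancel_right]

theorem HasTwoStepMortality.of_finite {Γ : Type} [Group Γ] [Finite Γ] : HasTwoStepMortality Γ := by
  intro Ω A _ _ _ _ _ _ f hf F₀ F₁ F₂ h₀ _ x hx _
  refine hf.isMortal_of_forall_support_subset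
    (finite_univ.smul h₀.finite : ((univ : Set Γ) • F₁).Finite)
    fun n => (h₀.support_iterate_subset x hx n).trans ?_
  rintro _ ⟨γ, s, hs, rfl⟩
  exact smul_mem_smul (mem_univ γ) hs

/-! ### The infinite cyclic group -/

section InfiniteCyclic

variable {Ω A : Type} [MulAction (Multiplicative ℤ) Ω] [Zero A] [TopologicalSpace A]
  {f : (Ω → A) → (Ω → A)} {F₀ F₁ F₂ : Set Ω} {c : Ω → Multiplicative ℤ}

theorem finite_saturation_inter_abs_lt (hc : ∀ γ ω, c (γ • ω) = γ * c ω) {F : Set Ω}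
    (hF : F.Finite) (r : ℤ) :
    (saturation (Multiplicative ℤ) F ∩ {ω | |(c ω).toAdd| < r}).Finite := by
  refine finite_saturation_inter_preimage hc hF (Q := {γ | |γ.toAdd| < r}) ?_
  refine Set.Finite.preimage Multiplicative.toAdd.injective.injOn (s := {k : ℤ | |k| < r}) ?_
  exact (finite_Ioo (-r) r).subset fun k hk => abs_lt.1 hk

/-- By periodicity, `w` vanishes forever on walls around the heights `-P` and `P` as well. -/
theorem IsConfined.isMortal_indicator_of_periodic [T2Space A]
    (hf : AsymptoticallyNilpotent (Multiplicative ℤ) f)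
    (hF : IsConfined (Multiplicative ℤ) f F₁ F₂)
    (hc : ∀ γ ω, c (γ • ω) = γ * c ω) {E : Set Ω}
    (hE : ∀ (γ : Multiplicative ℤ) (x y : Ω → A), (∀ e ∈ E, x (γ • e) = y (γ • e)) →
      ∀ s ∈ F₂, f x (γ • s) = f y (γ • s))
    {r : ℤ} (hr : ∀ e ∈ E, ∀ s ∈ F₂, |(c e).toAdd - (c s).toAdd| < r) {w : Ω → A}
    (hwF : support w ⊆ saturation (Multiplicative ℤ) F₁) (hw : IsMortal f w) {P : ℤ}
    (hper : (fun ω => w (Multiplicative.ofAdd P • ω)) = w)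
    (hwall : ∀ ω, |(c ω).toAdd| < r → ∀ n, f^[n] w ω = 0) :
    IsMortal f ({ω | |(c ω).toAdd| < P}.indicator w) := by
  have hiter : ∀ n ω, f^[n] w (Multiplicative.ofAdd P • ω) = f^[n] w ω := fun n ω => by
    conv_rhs => rw [← hper, hf.iterate_comp_smul]
  have hright : ∀ ω, |(c ω).toAdd - P| < r → ∀ n, f^[n] w ω = 0 := fun ω hω n => by
    rw [← smul_inv_smul (Multiplicative.ofAdd P) ω, hiter]
    refine hwall _ ?_ n
    rwa [hc, toAdd_mul, toAdd_inv, toAdd_ofAdd, neg_add_eq_sub]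
  have hleft : ∀ ω, |(c ω).toAdd + P| < r → ∀ n, f^[n] w ω = 0 := fun ω hω n => by
    rw [← hiter]
    refine hwall _ ?_ n
    rwa [hc, toAdd_mul, toAdd_ofAdd, add_comm]
  obtain ⟨m, hm⟩ := hw
  refine ⟨m, ?_⟩
  rw [hF.iterate_indicator hf hE hwF (fun γ s hs e he => ?_), hm, indicator_zero']
  have hdist := abs_lt.1 (hr e he s hs)
  rw [or_iff_not_imp_right]
  intro hne
  have h1 : ¬ |(c (γ • e)).toAdd - P| < r := fun h => hne (hright _ h)
  have h2 : ¬ |(c (γ • e)).toAdd + P| < r := fun h => hne (hleft _ h)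
  simp only [hc, toAdd_mul, mem_ofPred_eq, abs_lt] at h1 h2 ⊢
  omega

variable [IsCancelSMul (Multiplicative ℤ) Ω] [Finite A] [DiscreteTopology A]

theorem eventually_exists_periodic_isMortal (hf : AsymptoticallyNilpotent (Multiplicative ℤ) f)
    (h₀ : IsConfined (Multiplicative ℤ) f F₀ F₁) (h₁ : IsConfined (Multiplicative ℤ) f F₁ F₂)
    {u : Ω → A} (hu : support u ⊆ saturation (Multiplicative ℤ) F₀) {D : Set Ω} (hD : D.Finite) :
    ∀ᶠ P : ℕ in atTop, ∃ v, support v ⊆ saturation (Multiplicative ℤ) F₀ ∧ IsMortal f v ∧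
      (fun ω => v (Multiplicative.ofAdd (P : ℤ) • ω)) = v ∧ EqOn v u D := by
  have hbound : ∀ᶠ P : ℕ in atTop, ∀ γ ∈ {γ : Multiplicative ℤ | ∃ d ∈ D, γ • d ∈ D},
      γ.toAdd.natAbs < P :=
    (eventually_all_finite (finite_setOf_smul_mem hD hD)).2 fun _ _ => eventually_gt_atTop _
  filter_upwards [hbound, eventually_gt_atTop 0] with P hP hP0
  have : NeZero P := ⟨hP0.ne'⟩
  set N := (Int.castAddHom (ZMod P)).toMultiplicative.ker
  have hmem : ∀ γ, γ ∈ N ↔ (P : ℤ) ∣ γ.toAdd := fun γ =>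
    ofAdd_eq_one.trans (ZMod.intCast_zmod_eq_zero_iff_dvd _ P)
  have hN : {γ : Multiplicative ℤ | ∃ d ∈ D, γ • d ∈ D} ∩ N ⊆ {1} := fun γ ⟨hγ, hγN⟩ =>
    toAdd_eq_zero.1 (Int.eq_zero_of_dvd_of_natAbs_lt_natAbs ((hmem γ).1 hγN) (hP γ hγ))
  obtain ⟨p, hpfin, hpD, hpu⟩ := exists_periodic_eqOn hD hN u
  have hpF : support (p ∘ orbitClass N) ⊆ saturation (Multiplicative ℤ) F₀ :=
    hpD.trans <| (saturation_subgroup_subset N _).trans <|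
      saturation_subset_saturation (inter_subset_right.trans hu)
  exact ⟨p ∘ orbitClass N, hpF,
    HasTwoStepMortality.of_finite.isMortal_periodic hf h₀ h₁ p hpfin hpF,
    funext fun ω => congrArg p (orbitClass_smul N ⟨_, (hmem _).2 dvd_rfl⟩ ω), hpu⟩

/-- Repeating the blocking pattern `u` with a large period gives a mortal configuration, and the
copies of `u` act as walls between which the evolution of `u` alone can be read off. -/
theorem isMortal_of_isBlocking (hf : AsymptoticallyNilpotent (Multiplicative ℤ) f)
    (h₀ : IsConfined (Multiplicative ℤ) f F₀ F₁) (h₁ : IsConfined (Multiplicative ℤ) f F₁ F₂)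
    (hc : ∀ γ ω, c (γ • ω) = γ * c ω) {E : Set Ω}
    (hE : ∀ (γ : Multiplicative ℤ) (x y : Ω → A), (∀ e ∈ E, x (γ • e) = y (γ • e)) →
      ∀ s ∈ F₂, f x (γ • s) = f y (γ • s))
    {r : ℤ} (hr : ∀ e ∈ E, ∀ s ∈ F₂, |(c e).toAdd - (c s).toAdd| < r) {u : Ω → A}
    (hu : support u ⊆ saturation (Multiplicative ℤ) F₀) (hufin : (support u).Finite)
    (hblock : IsBlocking f {y | support y ⊆ saturation (Multiplicative ℤ) F₀}
      (saturation (Multiplicative ℤ) F₁ ∩ {ω | |(c ω).toAdd| < r}) u) : IsMortal f u := by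
  obtain ⟨D, hD, n₀, hDblock⟩ := hblock
  refine (hf.isMortal_iterate_iff n₀).1 <| hf.isMortal_of_approximable h₁
    (h₀.support_iterate_subset u hu n₀) (h₀.finite_support_iterate hf hu hufin n₀) fun I hI => ?_
  obtain ⟨D', hD', hloc⟩ := hf.exists_finite_iterate_congr hI n₀
  have hbound : ∀ᶠ P : ℕ in atTop, ∀ ω ∈ I, |(c ω).toAdd| < P :=
    (eventually_all_finite hI).2 fun _ _ => tendsto_natCast_atTop_atTop.eventually_gt_atTop _
  obtain ⟨P, ⟨v, hv, hvmortal, hper, hvu⟩, hP⟩ := ((eventually_exists_periodic_isMortal hf h₀ h₁ hu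
    (hD.union hD')).and hbound).exists
  have hwF : ∀ n, support (f^[n] (f^[n₀] v)) ⊆ saturation (Multiplicative ℤ) F₁ := fun n => by
    rw [← iterate_add_apply]
    exact h₀.support_iterate_subset v hv _
  have hwall : ∀ ω, |(c ω).toAdd| < r → ∀ n, f^[n] (f^[n₀] v) ω = 0 := fun ω hω n => by
    by_contra hne
    refine hne ?_
    rw [← iterate_add_apply]
    exact hDblock v hv (hvu.mono subset_union_left) _ (Nat.le_add_left n₀ n) ⟨hwF n hne, hω⟩
  refine ⟨{ω | |(c ω).toAdd| < P}.indicator (f^[n₀] v), ?_, ?_, ?_, fun ω hω => ?_⟩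
  · exact support_indicator.trans_subset (inter_subset_right.trans (hwF 0))
  · refine (finite_saturation_inter_abs_lt hc h₁.finite_left P).subset ?_
    exact support_indicator.trans_subset (inter_comm _ _ ▸ inter_subset_inter_left _ (hwF 0))
  · refine h₁.isMortal_indicator_of_periodic hf hc hE hr (hwF 0)
      ((hf.isMortal_iterate_iff n₀).2 hvmortal) ?_ hwall
    exact (hf.iterate_comp_smul n₀ _ v).symm.trans (by rw [hper]; rfl)
  · have hωP : ω ∈ {ω | |(c ω).toAdd| < (P : ℤ)} := hP ω hω
    rw [indicator_of_mem hωP]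
    simpa only [one_smul] using hloc 1 v u
      (fun e he => by rw [one_smul]; exact hvu (Or.inr he)) ω hω

theorem HasTwoStepMortality.multiplicative_int : HasTwoStepMortality (Multiplicative ℤ) := by
  intro Ω A _ _ _ _ _ _ f hf F₀ F₁ F₂ h₀ h₁ x hx hxfin
  obtain ⟨c, hc⟩ := exists_map_smul_eq_mul (Multiplicative ℤ) Ω
  obtain ⟨E, hE, hloc⟩ := hf.exists_finite_iterate_congr h₁.finite 1
  obtain ⟨r, hr⟩ : ∃ r : ℤ, ∀ e ∈ E, ∀ s ∈ F₂, |(c e).toAdd - (c s).toAdd| < r :=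
    ((eventually_all_finite hE).2 fun _ _ => (eventually_all_finite h₁.finite).2 fun _ _ =>
      eventually_gt_atTop _).exists
  set M : Set (Ω → A) := {y | support y ⊆ saturation (Multiplicative ℤ) F₀} with hM
  obtain ⟨P, hP, hPblock⟩ := hf.exists_isBlocking (M := M) ⟨0, by simp [hM]⟩
    (h₀.finite.union (finite_saturation_inter_abs_lt hc h₀.finite r))
  obtain ⟨D, hD, hblock⟩ := hPblock.indicator
  have hu : support (D.indicator P) ⊆ saturation (Multiplicative ℤ) F₀ :=
    support_indicator.trans_subset (inter_subset_right.trans hP)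
  have hufin : (support (D.indicator P)).Finite := hD.subset support_indicator_subset
  have hmortal : IsMortal f (D.indicator P) :=
    isMortal_of_isBlocking hf h₀ h₁ hc hloc hr hu hufin (hblock.mono subset_union_right)
  obtain ⟨W, hW, hwindow⟩ := hf.exists_window (⊥ : Subgroup (Multiplicative ℤ)) h₀ h₀.finite hu
    hufin (subset_saturation _ _) hmortal (M := M) (fun y hy => hy)
    (fun y hy _ _ => support_superpose_subset.trans (union_subset hu hy))
    (hblock.mono subset_union_left)
  obtain ⟨K, hK⟩ := hf.exists_isConfined_of_window ⊥ h₀ hW hwindow hxfin hx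
  refine hf.isMortal_of_forall_support_subset hK.finite fun n => ?_
  simpa only [saturation_bot] using
    hK.support_iterate_subset x (subset_saturation _ _) n

end InfiniteCyclic

/-! ### Residually finite groups -/

theorem exists_finiteIndexNormalSubgroup_inter_subset {Γ : Type*} [Group Γ]
    [Group.ResiduallyFinite Γ] {E : Set Γ} (hE : E.Finite) :
    ∃ N : FiniteIndexNormalSubgroup Γ, E ∩ N ⊆ {1} := by
  have : Finite ↥(E \ {1}) := hE.sdiff
  choose N hN using fun e : ↥(E \ {1}) =>
    Group.exists_finiteIndexNormalSubgroup_notMem (e : Γ) e.2.2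
  have : (⨅ e, (N e).toSubgroup).Normal := Subgroup.normal_iInf_normal fun _ => inferInstance
  have : (⨅ e, (N e).toSubgroup).FiniteIndex := Subgroup.finiteIndex_iInf fun _ => inferInstance
  refine ⟨.ofSubgroup (⨅ e, (N e).toSubgroup), fun e ⟨he, heN⟩ => ?_⟩
  by_contra he1
  exact hN ⟨e, he, he1⟩ (Subgroup.mem_iInf.1 heN _)

instance finiteIndex_map_mk' {Γ : Type*} [Group Γ] (L N : Subgroup Γ) [L.Normal] [N.FiniteIndex] :
    (N.map (QuotientGroup.mk' L)).FiniteIndex :=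
  ⟨ne_zero_of_dvd_ne_zero Subgroup.FiniteIndex.index_ne_zero
    (N.index_map_dvd (QuotientGroup.mk'_surjective L))⟩

instance residuallyFinite_pi {ι : Type*} {Λ : ι → Type*} [∀ i, Group (Λ i)]
    [∀ i, Group.ResiduallyFinite (Λ i)] :
    Group.ResiduallyFinite (∀ i, Λ i) := by
  rw [Group.residuallyFinite_iff_forall_finiteIndexNormalSubgroup]
  intro g hg
  funext i
  exact Group.eq_one_iff_forall_finiteIndexNormalSubroup (g i) fun K =>
    hg (K.comap (Pi.evalMonoidHom Λ i))

instance residuallyFinite_multiplicative_int : Group.ResiduallyFinite (Multiplicative ℤ) := by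
  rw [Group.residuallyFinite_iff_exists_finiteIndex]
  intro g hg
  have : NeZero (g.toAdd.natAbs + 1) := ⟨Nat.succ_ne_zero _⟩
  refine ⟨(Int.castAddHom (ZMod (g.toAdd.natAbs + 1))).toMultiplicative.ker, inferInstance,
    fun hker => hg <| toAdd_eq_zero.1 ?_⟩
  exact Int.eq_zero_of_dvd_of_natAbs_lt_natAbs
    ((ZMod.intCast_zmod_eq_zero_iff_dvd _ _).1 (ofAdd_eq_one.1 hker)) (Nat.lt_succ_self _)

section Abelian

theorem HasTwoStepMortality.of_leftInverse {ι : Type*} [Finite ι] {Γ : Type} [Group Γ]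
    [Group.ResiduallyFinite Γ] {Λ : ι → Type} [∀ i, Group (Λ i)] (π : ∀ i, Γ →* Λ i)
    (σ : ∀ i, Λ i →* Γ) (hσ : ∀ i, LeftInverse (π i) (σ i)) [Finite (⨅ i, (π i).ker : Subgroup Γ)]
    (h : ∀ i, HasTwoStepMortality (Λ i)) : HasTwoStepMortality Γ := by
  refine .of_forall_quotient (fun i => (π i).ker) fun i E hE => ?_
  obtain ⟨N, hN⟩ := exists_finiteIndexNormalSubgroup_inter_subset hE
  refine ⟨(π i).ker ⊓ N.toSubgroup, inferInstance, inf_le_left,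
    (inter_subset_inter_right E inter_subset_right).trans hN, ?_⟩
  set q := QuotientGroup.mk' ((π i).ker ⊓ N.toSubgroup)
  have hinj : Injective (q.comp (σ i)) := by
    refine (injective_iff_map_eq_one _).2 fun l hl => ?_
    have hker : σ i l ∈ (π i).ker ⊓ N.toSubgroup := (QuotientGroup.eq_one_iff _).1 hl
    rw [← hσ i l]
    exact hker.1
  have hle : (N ⊓ N.comap ((σ i).comp (π i))).toSubgroup.map q ≤ (q.comp (σ i)).range := by
    rintro _ ⟨k, ⟨hkN, hkσ⟩, rfl⟩
    refine ⟨π i k, QuotientGroup.eq.2 ⟨?_, N.toSubgroup.mul_mem (N.toSubgroup.inv_mem hkσ) hkN⟩⟩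
    simp [hσ i (π i k)]
  have : (q.comp (σ i)).range.FiniteIndex := Subgroup.finiteIndex_of_le hle
  exact (h i).of_injective hinj

theorem HasTwoStepMortality.of_commGroup_fg (Γ : Type) [CommGroup Γ] [Group.FG Γ] :
    HasTwoStepMortality Γ := by
  classical
  obtain ⟨ι, J, _, _, p, hp, e, ⟨iso⟩⟩ := CommGroup.equiv_free_prod_prod_multiplicative_zmod Γ
  have : ∀ i, NeZero (p i ^ e i) := fun i => ⟨pow_ne_zero _ (hp i).ne_zero⟩
  have : ∀ i, Finite (Multiplicative (ZMod (p i ^ e i))) := fun i =>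
    inferInstanceAs (Finite (ZMod (p i ^ e i)))
  let T := ∀ i, Multiplicative (ZMod (p i ^ e i))
  let π (j : J) : (J → Multiplicative ℤ) × T →* Multiplicative ℤ :=
    (Pi.evalMonoidHom _ j).comp (MonoidHom.fst _ _)
  let σ (j : J) : Multiplicative ℤ →* (J → Multiplicative ℤ) × T :=
    (MonoidHom.inl _ _).comp (MonoidHom.mulSingle (fun _ => Multiplicative ℤ) j)
  have : Finite (⨅ j, (π j).ker : Subgroup _) := by
    refine Finite.of_injective (fun g => (g : (J → Multiplicative ℤ) × T).2) fun g g' hgg' => ?_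
    refine Subtype.ext (Prod.ext (funext fun j => ?_) hgg')
    exact (Subgroup.mem_iInf.1 g.2 j).trans (Subgroup.mem_iInf.1 g'.2 j).symm
  have hprod : HasTwoStepMortality ((J → Multiplicative ℤ) × T) :=
    .of_leftInverse π σ
      (fun j k => Pi.mulSingle_eq_same (M := fun _ => Multiplicative ℤ) j k)
      fun _ => .multiplicative_int
  have : iso.symm.toMonoidHom.range.FiniteIndex := by
    rw [MonoidHom.range_eq_top.2 iso.symm.surjective]
    infer_instance
  exact hprod.of_injective (φ := iso.symm.toMonoidHom) iso.symm.injective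

theorem HasTwoStepMortality.of_comm {Γ : Type} [hΓ : Group Γ] (h : ∀ a b : Γ, a * b = b * a) :
    HasTwoStepMortality Γ := by
  let _ : CommGroup Γ := { hΓ with mul_comm := h }
  refine .of_forall_fg fun M hM => ?_
  have : Group.FG M := (Group.fg_iff_subgroup_fg M).2 hM
  exact .of_commGroup_fg M

end Abelian

section Solvable

open scoped commutatorElement

theorem HasConfinedMortality.of_commutator {Γ : Type} [Group Γ] [Group.ResiduallyFinite Γ]
    (h : HasConfinedMortality (commutator Γ)) : HasConfinedMortality Γ := by
  refine h.of_normal fun E hE => ?_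
  obtain ⟨N, hN⟩ := exists_finiteIndexNormalSubgroup_inter_subset hE
  refine ⟨commutator Γ ⊓ N.toSubgroup, inferInstance, inf_le_left,
    (inter_subset_inter_right E inter_subset_right).trans hN, ?_⟩
  refine HasConfinedMortality.of_finiteIndex (H := N.toSubgroup.map (QuotientGroup.mk' _))
    (HasTwoStepMortality.of_comm ?_).hasConfinedMortality
  rintro ⟨_, a, ha, rfl⟩ ⟨_, b, hb, rfl⟩
  refine Subtype.ext (QuotientGroup.eq.2 ⟨?_, N.toSubgroup.mul_mem
    (N.toSubgroup.inv_mem (N.toSubgroup.mul_mem ha hb)) (N.toSubgroup.mul_mem hb ha)⟩)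
  have hcomm : (a * b)⁻¹ * (b * a) = ⁅b⁻¹, a⁻¹⁆ := by
    simp only [commutatorElement_def, mul_inv_rev, inv_inv, mul_assoc]
  rw [hcomm]
  exact Subgroup.commutator_mem_commutator (Subgroup.mem_top _) (Subgroup.mem_top _)

theorem map_subtype_derivedSeries_commutator (Γ : Type*) [Group Γ] (n : ℕ) :
    (derivedSeries (commutator Γ) n).map (commutator Γ).subtype = derivedSeries Γ (n + 1) := by
  induction n with
  | zero => rw [derivedSeries_zero, ← MonoidHom.range_eq_map, Subgroup.range_subtype,
      derivedSeries_one]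
  | succ n ih => rw [derivedSeries_succ _ n, Subgroup.map_commutator, ih, ← derivedSeries_succ]

theorem HasConfinedMortality.of_derivedSeries_eq_bot {n : ℕ} {Γ : Type} [Group Γ]
    [Group.ResiduallyFinite Γ] (hn : derivedSeries Γ n = ⊥) : HasConfinedMortality Γ := by
  induction n generalizing Γ with
  | zero =>
    have : Subsingleton Γ := Subgroup.subsingleton_iff.1 (subsingleton_of_bot_eq_top hn.symm)
    exact HasTwoStepMortality.of_finite.hasConfinedMortality
  | succ n ih =>
    rw [← map_subtype_derivedSeries_commutator, Subgroup.map_eq_bot_iff_of_injective _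
      (Subgroup.subtype_injective _)] at hn
    exact (ih hn).of_commutator

theorem HasConfinedMortality.of_isSolvable_of_finiteIndex {Γ : Type} [Group Γ]
    [Group.ResiduallyFinite Γ] (H : Subgroup Γ) [H.FiniteIndex] [hH : Group.IsSolvable H] :
    HasConfinedMortality Γ :=
  have ⟨_, hn⟩ := hH.solvable
  (HasConfinedMortality.of_derivedSeries_eq_bot hn).of_finiteIndex

end Solvable

/-! ### Uniform nilpotency -/

theorem IsConfined.of_saturation_eq_univ {Γ Ω A : Type*} [Group Γ] [MulAction Γ Ω] [Zero A]
    (f : (Ω → A) → (Ω → A)) {F K : Set Ω} (hF : F.Finite) (hFΩ : saturation Γ F = univ)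
    (hK : K.Finite) : IsConfined Γ f K (K ∪ F) where
  finite := hK.union hF
  subset := subset_union_left
  support_iterate_subset _ _ _ ω _ := saturation_mono subset_union_right (hFΩ ▸ mem_univ ω)

section CofiniteActions

variable {Γ Ω A : Type} [Group Γ] [MulAction Γ Ω] [IsCancelSMul Γ Ω] [Zero A] [Finite A]
  [TopologicalSpace A] [DiscreteTopology A] {f : (Ω → A) → (Ω → A)} {F : Set Ω}

theorem HasConfinedMortality.exists_window (hΓ : HasConfinedMortality Γ)
    (hf : AsymptoticallyNilpotent Γ f) (hF : F.Finite) (hFΩ : saturation Γ F = univ) :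
    ∃ W : Set Ω, W.Finite ∧ ∀ y, EqOn y 0 W → ∀ n, EqOn (f^[n] y) 0 F := by
  obtain ⟨W, hW, hwindow⟩ :=
    hf.exists_window_of_isMortal (IsConfined.of_saturation_eq_univ f hF hFΩ hF) hF
  refine ⟨W, hW, fun y hy n s hs => ?_⟩
  obtain ⟨E, hE, hloc⟩ := hf.exists_finite_iterate_congr hF n
  have hfin : (support (E.indicator y)).Finite := hE.subset support_indicator_subset
  have hmortal : IsMortal f (E.indicator y) :=
    hΓ Ω A f hf (fun K hK => ⟨_, .of_saturation_eq_univ f hF hFΩ hK⟩) _ hfin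
  have hzero : EqOn (E.indicator y) 0 W := fun w hw => by
    by_cases hwE : w ∈ E
    · rw [indicator_of_mem hwE, hy hw]
    · rw [indicator_of_notMem hwE, Pi.zero_apply]
  have heq := hloc 1 y (E.indicator y) (fun e he => by rw [one_smul, indicator_of_mem he]) s hs
  rw [one_smul] at heq
  exact heq.trans (hwindow _ (hFΩ ▸ subset_univ _) hfin hmortal hzero n hs)

theorem HasConfinedMortality.exists_iterate_eq_zero (hΓ : HasConfinedMortality Γ)
    (hf : AsymptoticallyNilpotent Γ f) (hF : F.Finite) (hFΩ : saturation Γ F = univ) :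
    ∃ n, ∀ x, f^[n] x = 0 := by
  obtain ⟨W, hW, hwindow⟩ := hΓ.exists_window hf hF hFΩ
  have huniform : ∀ᶠ n in atTop, ∀ x ∈ univ, EqOn (f^[n] x) 0 F := by
    refine isCompact_univ.induction_on (p := fun s => ∀ᶠ n in atTop, ∀ x ∈ s, EqOn (f^[n] x) 0 F)
      (by simp) (fun s t hst ht => ht.mono fun n hn x hx => hn x (hst hx)) (fun s t hs ht => ?_)
      fun x _ => ?_
    · filter_upwards [hs, ht] with n hns hnt x hx using hx.elim (hns x) (hnt x)
    · obtain ⟨m, hm⟩ := (hf.eventually_eqOn_zero x hW).exists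
      refine ⟨{y | EqOn (f^[m] y) 0 W}, mem_nhdsWithin_of_mem_nhds ?_, ?_⟩
      · refine (hf.continuous.iterate m).continuousAt <| mem_nhds_configuration_iff.2
          ⟨W, hW, fun y hy => hy.trans hm⟩
      · filter_upwards [eventually_ge_atTop m] with n hn y hy
        rw [← Nat.sub_add_cancel hn, iterate_add_apply]
        exact hwindow _ hy _
  obtain ⟨n, hn⟩ := huniform.exists
  refine ⟨n, fun x => funext fun ω => ?_⟩
  obtain ⟨γ, s, hs, rfl⟩ : ω ∈ saturation Γ F := hFΩ ▸ mem_univ ω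
  have hγ := hn (fun ω => x (γ • ω)) (mem_univ _) hs
  rwa [hf.iterate_comp_smul] at hγ

end CofiniteActions

/-- Let `G` be a residually finite virtually solvable group, `A` a
finite alphabet with a distinguished element `a₀`, and `f` a cellular automaton on
the full shift `A^G` (a continuous shift-commuting map, where the shift is
`(g·x)(h) = x(g⁻¹h)`). If `fⁿ(x) → a₀^G` for every configuration `x`, then `f` is
nilpotent. -/
theorem statement13 {G A : Type} [Group G]
    [Finite A] [TopologicalSpace A] [DiscreteTopology A] (a₀ : A)
    (hRF : ResiduallyFinite G)
    (hVS : ∃ H : Subgroup G, H.FiniteIndex ∧ IsSolvable H)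
    (f : (G → A) → (G → A)) (hf : Continuous f)
    (hfeq : ∀ (g : G) (x : G → A),
      f (fun h => x (g⁻¹ * h)) = fun h => f x (g⁻¹ * h))
    (hAN : ∀ x : G → A,
      Filter.Tendsto (fun n => f^[n] x) Filter.atTop (nhds fun _ => a₀)) :
    ∃ n : ℕ, ∀ x : G → A, f^[n] x = fun _ => a₀ := by
  let _ : Zero A := ⟨a₀⟩
  obtain ⟨H, _, (hH : Group.IsSolvable H)⟩ := hVS
  have : Group.ResiduallyFinite G :=
    Group.residuallyFinite_of_forall_exists_finite_monoidHom fun g hg =>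
      have ⟨Q, hQ, φ, hfin, hφ⟩ := hRF g hg
      ⟨Q, hQ, hfin, φ, hφ⟩
  have hf₀ : AsymptoticallyNilpotent G f :=
    ⟨hf, fun γ x => by simpa only [inv_inv, smul_eq_mul] using hfeq γ⁻¹ x, hAN⟩
  have hG : saturation G {(1 : G)} = univ :=
    eq_univ_of_forall fun g => ⟨g, 1, rfl, mul_one g⟩
  exact (HasConfinedMortality.of_isSolvable_of_finiteIndex H).exists_iterate_eq_zero hf₀
    (finite_singleton 1) hG
end

section
/- Let (ℤ, X, 0) be an expansive pointed ℤ-dynamical system such that for each homoclinic point x ∈ X and all ε > 0, there exist two points x¹, x² ∈ X such that for each i ∈ {1, 2} and each n ∈ ℤ there exists k ∈ ℤ with d(n·xⁱ, k·x) < ε, and moreover one can choose k = 0 for infinitely many positive n when i = 1, and k = 0 for infinitely many negative n when i = 2. Then every asymptotically nilpotent endomorphism f : X → X of (ℤ, X, 0) is nilpotent. -/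
/-!
Think of a point as a configuration on `ℤ` that is quiet at the times when its orbit is close to
the fixed point `0`, and let `σ` be the generator of the action. If an asymptotically nilpotent `f`
is not nilpotent, it has a *glider*: a homoclinic point `z ≠ 0` with `f^n z = σ^k z` for some
`n > 0` and some `k`, necessarily nonzero. By expansivity, `f^n x = σ^k x` holds for every `x` whose
orbit stays close to the orbit of `z`. Since `f^(n t) x = σ^(k t) x` tends to `0`, the orbit of such
an `x` converges to `0` in the direction given by the sign of `k`, so it returns only finitely often
to a neighbourhood of `z` in that direction, against the recurrence hypothesis.

To find a glider, take a minimal system of backward orbits of `f` that are not identically `0`.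
Every bounded window becomes silent forever after finitely many steps, so by Baire's theorem and
minimality every active coordinate of a point of this system has a *wall* at bounded distance: a
silent block that activity cannot cross. Suppose activity escapes from a wall to the right. Between
consecutive walls activity dies within a bounded time, so the advancing front leaves nothing behind,
and the iterates recentered at the front accumulate only at points supported in a fixed bounded
window. Expansivity leaves finitely many of those, and `f` maps them to each other up to shifts,
which gives a glider. If activity never escapes in either direction, compactness makes `f` nilpotent
on the subsystem, on which it is onto: a contradiction.
-/

section Topology

open Set Filter Topology Function

variable {X ι : Type*}

theorem exists_nat_forall_mem_exists_le [TopologicalSpace X] {K : Set X} (hK : IsCompact K)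
    {U : ℕ → Set X} (hU : ∀ n, IsOpen (U n)) (hKU : K ⊆ ⋃ n, U n) :
    ∃ N, ∀ x ∈ K, ∃ n ≤ N, x ∈ U n := by
  obtain ⟨F, hF⟩ := hK.elim_finite_subcover U hU hKU
  refine ⟨F.sup id, fun x hx => ?_⟩
  obtain ⟨n, hnF, hxn⟩ := mem_iUnion₂.1 (hF hx)
  exact ⟨n, F.le_sup (f := id) hnF, hxn⟩

theorem exists_finset_forall_dist_lt [PseudoMetricSpace X] [CompactSpace X] {τ : ι → X → X}
    (hτ : ∀ i, Continuous (τ i)) {Δ ε : ℝ}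
    (hexp : ∀ x y, (∀ i, dist (τ i x) (τ i y) ≤ Δ) → x = y) (hε : 0 < ε) :
    ∃ F : Finset ι, ∀ x y, (∀ i ∈ F, dist (τ i x) (τ i y) ≤ Δ) → dist x y < ε := by
  have hK : IsCompact {p : X × X | ε ≤ dist p.1 p.2} :=
    (isClosed_le continuous_const continuous_dist).isCompact
  obtain ⟨F, hF⟩ := hK.elim_finite_subcover
    (fun i => {p : X × X | Δ < dist (τ i p.1) (τ i p.2)})
    (fun i => isOpen_lt continuous_const
      (((hτ i).comp continuous_fst).dist ((hτ i).comp continuous_snd)))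
    (fun ⟨x, y⟩ hxy => by
      by_contra! hnot
      have hsep : x = y := hexp x y fun i => not_lt.1 fun hi => hnot (mem_iUnion.2 ⟨i, hi⟩)
      rw [mem_ofPred_eq, hsep, dist_self] at hxy
      exact hε.not_ge hxy)
  refine ⟨F, fun x y hF' => not_le.1 fun hxy => ?_⟩
  obtain ⟨i, hiF, hi⟩ := mem_iUnion₂.1 (hF (show (x, y) ∈ {p : X × X | ε ≤ dist p.1 p.2} from hxy))
  exact (hF' i hiF).not_gt hi

theorem exists_isOpen_inter_subset_of_subset_iUnion [TopologicalSpace X] [T2Space X] {K : Set X}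
    (hK : IsCompact K) (hne : K.Nonempty) {C : ℕ → Set X} (hC : ∀ n, IsClosed (C n))
    (hKC : K ⊆ ⋃ n, C n) : ∃ n V, IsOpen V ∧ (V ∩ K).Nonempty ∧ V ∩ K ⊆ C n := by
  have := hne.to_subtype
  have := isCompact_iff_compactSpace.1 hK
  obtain ⟨n, x, hx⟩ := nonempty_interior_of_iUnion_of_closed
    (f := fun n => ((↑) : K → X) ⁻¹' C n) (fun n => (hC n).preimage continuous_subtype_val)
    (by rw [← preimage_iUnion]; exact eq_univ_of_forall fun x => hKC x.2)
  obtain ⟨V, hV, hVeq⟩ := isOpen_induced_iff.1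
    (isOpen_interior (s := ((↑) : K → X) ⁻¹' C n))
  refine ⟨n, V, hV, ⟨x, hVeq.symm.subset hx, x.2⟩, fun y ⟨hyV, hyK⟩ => ?_⟩
  have hyn : (⟨y, hyK⟩ : K) ∈ interior (((↑) : K → X) ⁻¹' C n) := hVeq.subset hyV
  exact interior_subset (s := ((↑) : K → X) ⁻¹' C n) hyn

theorem exists_mapClusterPt_of_eventually_exists_eq [TopologicalSpace X] {J : Set ι}
    (hJ : J.Finite) {g : ι → X → X} (hg : ∀ j, Continuous (g j)) {x : ℕ → X}
    (hx : ∀ᶠ m in atTop, ∃ j ∈ J, x (m + 1) = g j (x m)) {z : X}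
    (hz : MapClusterPt z atTop x) : ∃ j ∈ J, MapClusterPt (g j z) atTop x := by
  obtain ⟨U, hU, hzU⟩ := mapClusterPt_iff_ultrafilter.1 hz
  obtain ⟨j, hj, hjU⟩ := (Ultrafilter.eventually_exists_mem_iff hJ).1 (hU hx)
  have hlim : Tendsto (x ∘ (· + 1)) U (𝓝 (g j z)) :=
    (((hg j).tendsto z).comp hzU).congr' (hjU.mono fun _ hm => hm.symm)
  exact ⟨j, hj, hlim.mapClusterPt.of_comp ((tendsto_add_atTop_nat 1).mono_left hU)⟩

theorem exists_backward_orbit_of_forall_exists_iterate_mem [TopologicalSpace X] [CompactSpace X]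
    [T2Space X] {f : X → X} (hf : Continuous f) {K : Set X} (hK : IsClosed K)
    (hKf : ∀ n, ∃ x, f^[n] x ∈ K) :
    ∃ h : ℕ → X, (∀ i, f (h (i + 1)) = h i) ∧ h 0 ∈ K := by
  let partialOrbits : ℕ → Set (ℕ → X) := fun n =>
    {h | h 0 ∈ K} ∩ ⋂ i, ⋂ (_ : i < n), {h | f (h (i + 1)) = h i}
  have hclosed : ∀ n, IsClosed (partialOrbits n) := fun n =>
    (hK.preimage (continuous_apply 0)).inter <| isClosed_iInter fun i => isClosed_iInter fun _ =>
      isClosed_eq (hf.comp (continuous_apply _)) (continuous_apply _)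
  have hanti : ∀ n, partialOrbits (n + 1) ⊆ partialOrbits n := fun n =>
    inter_subset_inter_right _ <| biInter_subset_biInter_left fun i (hi : i < n) =>
      hi.trans n.lt_succ_self
  have hne : ∀ n, (partialOrbits n).Nonempty := fun n => by
    obtain ⟨x, hx⟩ := hKf n
    refine ⟨fun i => f^[n - i] x, hx, mem_iInter₂.2 fun i hi => ?_⟩
    change f (f^[n - (i + 1)] x) = f^[n - i] x
    rw [← iterate_succ_apply' f, show (n - (i + 1)).succ = n - i by omega]
  obtain ⟨h, hh⟩ := IsCompact.nonempty_iInter_of_sequence_nonempty_isCompact_isClosed partialOrbits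
    hanti hne (hclosed 0).isCompact hclosed
  rw [mem_iInter] at hh
  exact ⟨h, fun i => mem_iInter₂.1 (hh (i + 1)).2 i i.lt_succ_self, (hh 0).1⟩

theorem periodicPts_nonempty [Finite X] [Nonempty X] (φ : X → X) : (periodicPts φ).Nonempty := by
  inhabit X
  obtain ⟨m, n, hmn, heq⟩ : ∃ m n, m < n ∧ φ^[m] default = φ^[n] default := by
    obtain ⟨m, n, hne, heq⟩ := Finite.exists_ne_map_eq_of_infinite (φ^[·] default)
    rcases hne.lt_or_gt with h | h
    exacts [⟨m, n, h, heq⟩, ⟨n, m, h, heq.symm⟩]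
  refine ⟨φ^[m] default, mk_mem_periodicPts (Nat.sub_pos_of_lt hmn) ?_⟩
  rw [IsPeriodicPt, IsFixedPt, ← iterate_add_apply, Nat.sub_add_cancel hmn.le, heq]

/-- A closed set that meets `K` and is invariant under every map of the family `τ`. A minimal set
of this kind plays the role of a minimal subsystem; prescribing `K` keeps it away from a fixed
point outside `K`. -/
structure IsInvariantMeeting [TopologicalSpace X] (τ : ι → X → X) (K M : Set X) : Prop where
  isClosed : IsClosed M
  mapsTo : ∀ i, MapsTo (τ i) M M
  nonempty_inter : (M ∩ K).Nonempty

namespace IsInvariantMeeting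

variable [TopologicalSpace X] {τ : ι → X → X} {K M : Set X}

theorem exists_minimal_subset [CompactSpace X] (hK : IsClosed K) (hM : IsInvariantMeeting τ K M) :
    ∃ M' ⊆ M, Minimal (IsInvariantMeeting τ K) M' := by
  refine zorn_superset_nonempty {M | IsInvariantMeeting τ K M} (fun c hc hchain hne => ?_) M hM
  refine ⟨⋂₀ c, ⟨isClosed_sInter fun s hs => (hc hs).isClosed,
    fun i x hx s hs => (hc hs).mapsTo i (hx s hs), ?_⟩, fun s => sInter_subset_of_mem⟩
  have := hne.to_subtype
  have hdir : Directed (· ⊇ ·) fun s : c => (s : Set X) ∩ K := fun s t =>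
    (hchain.total s.2 t.2).elim (fun h => ⟨s, le_rfl, inter_subset_inter_left _ h⟩)
      fun h => ⟨t, inter_subset_inter_left _ h, le_rfl⟩
  have hcl : ∀ s : c, IsClosed ((s : Set X) ∩ K) := fun s => (hc s.2).isClosed.inter hK
  have := IsCompact.nonempty_iInter_of_directed_nonempty_isCompact_isClosed _ hdir
    (fun s => (hc s.2).nonempty_inter) (fun s => (hcl s).isCompact) hcl
  rwa [← iInter_inter, ← sInter_eq_iInter] at this

theorem subset_closure_of_minimal (hτ : ∀ i, Continuous (τ i))
    (hM : Minimal (IsInvariantMeeting τ K) M) {O : Set X} (hOM : O ⊆ M)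
    (hO : ∀ i, MapsTo (τ i) O O) (hOK : (O ∩ K).Nonempty) : M ⊆ closure O :=
  hM.2 ⟨isClosed_closure, fun i => (hO i).closure (hτ i),
    hOK.mono (inter_subset_inter_left _ subset_closure)⟩ (closure_minimal hOM hM.1.isClosed)

theorem subset_image_of_minimal [CompactSpace X] [T2Space X]
    (hτ : ∀ i, Continuous (τ i)) (hM : Minimal (IsInvariantMeeting τ K) M) {i : ι}
    (hcomm : ∀ j, Function.Commute (τ i) (τ j)) (hiK : (τ i '' M ∩ K).Nonempty) :
    M ⊆ τ i '' M := by
  have hcl : IsClosed (τ i '' M) := (hM.1.isClosed.isCompact.image (hτ i)).isClosed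
  have hinv : ∀ j, MapsTo (τ j) (τ i '' M) (τ i '' M) := by
    rintro j _ ⟨x, hx, rfl⟩
    exact ⟨τ j x, hM.1.mapsTo j hx, hcomm j x⟩
  exact (subset_closure_of_minimal hτ hM (hM.1.mapsTo i).image_subset hinv hiK).trans
    hcl.closure_eq.le

end IsInvariantMeeting

end Topology

/-- An endomorphism `map` of an expansive pointed `ℤ`-system, the action being generated by the
homeomorphism `shift`. The integer `radius` is a memory bound in the sense of cellular automata: by
uniform expansivity, a point that is `Δ`-close to `zero` at the times `-radius, …, radius` is
`Δ / 2`-close to it now, and so is its image. -/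
structure ExpansiveEndo (X : Type*) [MetricSpace X] where
  shift : X ≃ₜ X
  zero : X
  map : X → X
  Δ : ℝ
  radius : ℕ
  shift_zero : ∀ k : ℤ, (shift ^ k) zero = zero
  map_zero : map zero = zero
  Δ_pos : 0 < Δ
  expansive : ∀ x y, (∀ k : ℤ, dist ((shift ^ k) x) ((shift ^ k) y) ≤ Δ) → x = y
  continuous_map : Continuous map
  map_shift : ∀ (k : ℤ) x, map ((shift ^ k) x) = (shift ^ k) (map x)
  dist_le_half : ∀ y, (∀ j ∈ Set.Icc (-radius : ℤ) radius, dist ((shift ^ j) y) zero ≤ Δ) →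
    dist y zero ≤ Δ / 2 ∧ dist (map y) zero ≤ Δ / 2

namespace ExpansiveEndo

open Set Filter Topology

variable {X : Type*} [MetricSpace X] (S : ExpansiveEndo X) {x y z : X}

/-- Every orbit of the endomorphism converges to the fixed point. -/
def AsymptoticallyNilpotent : Prop := ∀ x, Tendsto (fun n => S.map^[n] x) atTop (𝓝 S.zero)

/-- The distance to the fixed point at time `k`; a point is thought of as a configuration on `ℤ`
whose content at the coordinate `k` has this size. -/
def height (y : X) (k : ℤ) : ℝ := dist ((S.shift ^ k) y) S.zero

/-- A coordinate at which the configuration cannot be told from the fixed point; the other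
coordinates are called active. -/
def Quiet (y : X) (k : ℤ) : Prop := S.height y k < S.Δ

/-- A coordinate that stays quiet under all iterates. The bound `Δ / 2` in place of `Δ` makes this
a closed condition on `y` that still implies quietness. -/
def Silent (y : X) (k : ℤ) : Prop := ∀ m, S.height (S.map^[m] y) k ≤ S.Δ / 2

/-- A block of silent coordinates that is too wide for activity to cross. -/
def Wall (y : X) (a : ℤ) : Prop := ∀ j ∈ Icc (a - S.radius) (a + S.radius), S.Silent y j

/-- The points whose activity is confined to the coordinates in `I`. -/
def supported (I : Set ℤ) : Set X := {x | ∀ k ∉ I, S.height x k ≤ S.Δ}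

/-- A nonzero homoclinic point on which some iterate of the endomorphism acts as a shift. -/
structure IsGlider (z : X) : Prop where
  ne_zero : z ≠ S.zero
  homoclinic : Tendsto (fun k : ℤ => (S.shift ^ k) z) cofinite (𝓝 S.zero)
  exists_iterate_eq : ∃ n > 0, ∃ k : ℤ, S.map^[n] z = (S.shift ^ k) z

theorem shift_shift (j k : ℤ) (y : X) :
    (S.shift ^ j) ((S.shift ^ k) y) = (S.shift ^ (j + k)) y := by
  rw [zpow_add, Homeomorph.mul_apply]

theorem iterate_shift (m : ℕ) (k : ℤ) (y : X) :
    S.map^[m] ((S.shift ^ k) y) = (S.shift ^ k) (S.map^[m] y) :=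
  Function.Commute.iterate_left (S.map_shift k) m y

theorem height_shift (j k : ℤ) (y : X) : S.height ((S.shift ^ j) y) k = S.height y (k + j) := by
  rw [height, shift_shift, height]

theorem height_zero (k : ℤ) : S.height S.zero k = 0 := by
  rw [height, S.shift_zero, dist_self]

theorem quiet_shift {j k : ℤ} : S.Quiet ((S.shift ^ j) y) k ↔ S.Quiet y (k + j) := by
  rw [Quiet, height_shift, Quiet]

theorem quiet_iterate_shift {m : ℕ} {j k : ℤ} :
    S.Quiet (S.map^[m] ((S.shift ^ j) y)) k ↔ S.Quiet (S.map^[m] y) (k + j) := by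
  rw [iterate_shift, quiet_shift]

theorem silent_shift {j k : ℤ} : S.Silent ((S.shift ^ j) y) k ↔ S.Silent y (k + j) := by
  simp only [Silent, iterate_shift, height_shift]

theorem wall_shift {j a : ℤ} : S.Wall ((S.shift ^ j) y) a ↔ S.Wall y (a + j) := by
  simp only [Wall, silent_shift]
  refine ⟨fun h i hi => ?_, fun h i hi => h _ (by grind)⟩
  simpa only [sub_add_cancel] using h (i - j) (by grind)

theorem continuous_height (m : ℕ) (k : ℤ) : Continuous fun y => S.height (S.map^[m] y) k :=
  ((S.shift ^ k).continuous.comp (S.continuous_map.iterate m)).dist continuous_const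

theorem isOpen_setOf_quiet (m : ℕ) (k : ℤ) : IsOpen {y | S.Quiet (S.map^[m] y) k} :=
  isOpen_lt (S.continuous_height m k) continuous_const

theorem isOpen_setOf_forall_quiet (m : ℕ) (a b : ℤ) :
    IsOpen {y | ∀ k ∈ Icc a b, S.Quiet (S.map^[m] y) k} := by
  simp only [ofPred_forall]
  exact (finite_Icc a b).isOpen_biInter fun k _ => S.isOpen_setOf_quiet m k

theorem isClosed_setOf_wall (a : ℤ) : IsClosed {y | S.Wall y a} := by
  simp only [Wall, Silent, ofPred_forall]
  exact isClosed_iInter fun j => isClosed_iInter fun _ => isClosed_iInter fun m =>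
    isClosed_le (S.continuous_height m j) continuous_const

theorem isClosed_supported (I : Set ℤ) : IsClosed (S.supported I) := by
  simp only [supported, ofPred_forall]
  exact isClosed_iInter fun k => isClosed_iInter fun _ =>
    isClosed_le (S.continuous_height 0 k) continuous_const

variable {S}

theorem eq_zero_of_forall_quiet (h : ∀ k, S.Quiet y k) : y = S.zero :=
  S.expansive y S.zero fun k => by
    rw [S.shift_zero]
    exact (h k).le

theorem exists_not_quiet (hy : y ≠ S.zero) : ∃ k, ¬ S.Quiet y k := by
  contrapose! hy
  exact eq_zero_of_forall_quiet hy

theorem ne_zero_of_not_quiet {k : ℤ} (h : ¬ S.Quiet y k) : y ≠ S.zero := by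
  rintro rfl
  exact h (by rw [Quiet, height_zero]; exact S.Δ_pos)

theorem Silent.iterate {k : ℤ} (h : S.Silent y k) (m : ℕ) : S.Silent (S.map^[m] y) k := fun n => by
  rw [← Function.iterate_add_apply]
  exact h (n + m)

theorem Silent.quiet {k : ℤ} (h : S.Silent y k) (m : ℕ) : S.Quiet (S.map^[m] y) k :=
  (h m).trans_lt (half_lt_self S.Δ_pos)

theorem Wall.iterate {a : ℤ} (h : S.Wall y a) (m : ℕ) : S.Wall (S.map^[m] y) a :=
  fun j hj => (h j hj).iterate m

theorem Wall.silent {a : ℤ} (h : S.Wall y a) : S.Silent y a := h a (by simp)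

theorem height_le_half_and_quiet_map {k : ℤ}
    (h : ∀ j ∈ Icc (k - S.radius) (k + S.radius), S.height y j ≤ S.Δ) :
    S.height y k ≤ S.Δ / 2 ∧ S.Quiet (S.map y) k := by
  have hk := S.dist_le_half ((S.shift ^ k) y) fun j hj => by
    rw [shift_shift]
    exact h (j + k) (by grind)
  rw [S.map_shift] at hk
  exact ⟨hk.1, hk.2.trans_lt (half_lt_self S.Δ_pos)⟩

theorem quiet_iterate_of_guarded {P : ℕ → Set ℤ} (h₀ : ∀ k ∈ P 0, S.Quiet y k)
    (hP : ∀ t, ∀ k ∈ P (t + 1), ∀ j ∈ Icc (k - S.radius) (k + S.radius), j ∈ P t ∨ S.Silent y j)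
    (t : ℕ) : ∀ k ∈ P t, S.Quiet (S.map^[t] y) k := by
  induction t with
  | zero => exact h₀
  | succ t ih =>
    intro k hk
    rw [Function.iterate_succ_apply']
    exact (height_le_half_and_quiet_map fun j hj =>
      ((hP t k hk j hj).elim (ih j) fun hj => hj.quiet t).le).2

theorem quiet_iterate_of_Icc {a b : ℤ} (h : ∀ k ∈ Icc a b, S.Quiet y k) (t : ℕ) :
    ∀ k ∈ Icc (a + S.radius * t) (b - S.radius * t), S.Quiet (S.map^[t] y) k := by
  refine quiet_iterate_of_guarded
    (P := fun t : ℕ => Icc (a + S.radius * t) (b - S.radius * t)) (by simpa using h) ?_ t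
  rintro t k ⟨hak, hkb⟩ j ⟨hkj, hjk⟩
  exact .inl ⟨by lia, by lia⟩

theorem Wall.quiet_iterate_of_Icc {a b : ℤ} (ha : S.Wall y a)
    (h : ∀ k ∈ Icc a b, S.Quiet y k) (t : ℕ) :
    ∀ k ∈ Icc a (b - S.radius * t), S.Quiet (S.map^[t] y) k := by
  refine quiet_iterate_of_guarded (P := fun t : ℕ => Icc a (b - S.radius * t))
    (by simpa using h) ?_ t
  rintro t k ⟨hak, hkb⟩ j ⟨hkj, hjk⟩
  rcases lt_or_ge j a with hja | haj
  · exact .inr (ha j ⟨by lia, by lia⟩)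
  · exact .inl ⟨haj, by lia⟩

theorem Wall.quiet_iterate_of_wall {a b : ℤ} (ha : S.Wall y a) (hb : S.Wall y b)
    (h : ∀ k ∈ Icc a b, S.Quiet y k) (t : ℕ) : ∀ k ∈ Icc a b, S.Quiet (S.map^[t] y) k := by
  refine quiet_iterate_of_guarded (P := fun _ => Icc a b) h ?_ t
  rintro - k ⟨hak, hkb⟩ j ⟨hkj, hjk⟩
  rcases lt_or_ge j a with hja | haj
  · exact .inr (ha j ⟨by lia, by lia⟩)
  rcases lt_or_ge b j with hbj | hjb
  · exact .inr (hb j ⟨by lia, by lia⟩)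
  · exact .inl ⟨haj, hjb⟩

theorem AsymptoticallyNilpotent.eventually_height_lt (hS : S.AsymptoticallyNilpotent) (y : X)
    (k : ℤ) {ε : ℝ} (hε : 0 < ε) : ∀ᶠ m in atTop, S.height (S.map^[m] y) k < ε := by
  have hk : Tendsto (fun m => (S.shift ^ k) (S.map^[m] y)) atTop (𝓝 S.zero) := by
    simpa only [Function.comp_def, S.shift_zero] using
      ((S.shift ^ k).continuous.tendsto S.zero).comp (hS y)
  exact Metric.tendsto_nhds.1 hk ε hε

theorem AsymptoticallyNilpotent.eventually_forall_quiet (hS : S.AsymptoticallyNilpotent) (y : X)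
    (a b : ℤ) : ∀ᶠ m in atTop, ∀ k ∈ Icc a b, S.Quiet (S.map^[m] y) k :=
  (eventually_all_finite (finite_Icc a b)).2 fun k _ => hS.eventually_height_lt y k S.Δ_pos

theorem AsymptoticallyNilpotent.exists_wall_iterate (hS : S.AsymptoticallyNilpotent) (y : X)
    (a : ℤ) : ∃ m, S.Wall (S.map^[m] y) a := by
  obtain ⟨m, hm⟩ := eventually_atTop.1 <|
    (eventually_all_finite (finite_Icc (a - S.radius) (a + S.radius))).2
      fun k _ => hS.eventually_height_lt y k (half_pos S.Δ_pos)
  refine ⟨m, fun k hk n => ?_⟩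
  rw [← Function.iterate_add_apply]
  exact (hm (n + m) (Nat.le_add_left m n) k hk).le

theorem AsymptoticallyNilpotent.exists_forall_quiet_between_walls [CompactSpace X]
    (hS : S.AsymptoticallyNilpotent) (L : ℤ) :
    ∃ T : ℕ, ∀ y a b, S.Wall y a → S.Wall y b → b ≤ a + L →
      ∀ m ≥ T, ∀ k ∈ Icc a b, S.Quiet (S.map^[m] y) k := by
  obtain ⟨T, hT⟩ := exists_nat_forall_mem_exists_le isCompact_univ
    (fun m => S.isOpen_setOf_forall_quiet m 0 L)
    (fun y _ => mem_iUnion.2 (hS.eventually_forall_quiet y 0 L).exists)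
  refine ⟨T, fun y a b ha hb hab m hTm => ?_⟩
  obtain ⟨t, htT, ht⟩ := hT ((S.shift ^ a) y) (mem_univ _)
  obtain ⟨s, rfl⟩ := Nat.exists_eq_add_of_le' (htT.trans hTm)
  rw [Function.iterate_add_apply]
  refine (ha.iterate t).quiet_iterate_of_wall (hb.iterate t) (fun k hk => ?_) s
  simpa only [quiet_iterate_shift, sub_add_cancel] using ht (k - a) (by grind)

theorem finite_supported [CompactSpace X] {I : Set ℤ} (hI : I.Finite) :
    (S.supported I).Finite := by
  have hN : (⋃ k ∈ I, Icc (k - S.radius) (k + S.radius)).Finite :=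
    hI.biUnion fun k _ => finite_Icc _ _
  set N := ⋃ k ∈ I, Icc (k - S.radius) (k + S.radius)
  have hhalf : ∀ x ∈ S.supported I, ∀ k ∉ N, S.height x k ≤ S.Δ / 2 := fun x hx k hk =>
    (height_le_half_and_quiet_map fun j hj => hx j fun hjI =>
      hk (mem_iUnion₂.2 ⟨j, hjI, by grind⟩)).1
  refine (S.isClosed_supported I).isCompact.finite (isDiscrete_iff_forall_mem_exists_isOpen.2
    fun x hx => ⟨⋂ k ∈ N, {u | dist ((S.shift ^ k) u) ((S.shift ^ k) x) < S.Δ},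
      hN.isOpen_biInter fun k _ => isOpen_lt
        ((S.shift ^ k).continuous.dist continuous_const) continuous_const, ?_⟩)
  refine Subset.antisymm (fun u ⟨hclose, hu⟩ => S.expansive u x fun k => ?_) ?_
  · by_cases hk : k ∈ N
    · exact (mem_iInter₂.1 hclose k hk).le
    · have hux := dist_triangle_right ((S.shift ^ k) u) ((S.shift ^ k) x) S.zero
      exact hux.trans ((add_le_add (hhalf u hu k hk) (hhalf x hx k hk)).trans_eq (add_halves _))
  · refine singleton_subset_iff.2 ⟨mem_iInter₂.2 fun k _ => ?_, hx⟩
    rw [mem_ofPred_eq, dist_self]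
    exact S.Δ_pos

theorem tendsto_shift_cofinite_of_mem_supported [CompactSpace X] {I : Set ℤ} (hI : I.Finite)
    (hx : x ∈ S.supported I) :
    Tendsto (fun k : ℤ => (S.shift ^ k) x) cofinite (𝓝 S.zero) := by
  refine Metric.tendsto_nhds.2 fun ε hε => ?_
  obtain ⟨F, hF⟩ := exists_finset_forall_dist_lt (fun k => (S.shift ^ k).continuous) S.expansive hε
  have hoff : ∀ᶠ k in cofinite, ∀ j ∈ F, j + k ∉ I :=
    (eventually_all_finset F).2 fun j _ => (add_right_injective j).tendsto_cofinite.eventually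
      hI.eventually_cofinite_notMem
  filter_upwards [hoff] with k hk
  refine hF _ _ fun j hj => ?_
  rw [shift_shift, S.shift_zero]
  exact hx _ (hk j hj)

variable (S) in
/-- The same endomorphism seen over the inverse shift, which exchanges left and right. -/
def mirror : ExpansiveEndo X where
  shift := S.shift⁻¹
  zero := S.zero
  map := S.map
  Δ := S.Δ
  radius := S.radius
  shift_zero k := by rw [inv_zpow', S.shift_zero]
  map_zero := S.map_zero
  Δ_pos := S.Δ_pos
  expansive x y h := S.expansive x y fun k => by simpa only [inv_zpow', neg_neg] using h (-k)
  continuous_map := S.continuous_map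
  map_shift k x := by rw [inv_zpow', S.map_shift]
  dist_le_half y h := S.dist_le_half y fun j hj => by
    simpa only [inv_zpow', neg_neg] using h (-j) (by grind)

theorem mirror_shift_zpow (k : ℤ) : S.mirror.shift ^ k = S.shift ^ (-k) := inv_zpow' _ _

theorem mirror_height (y : X) (k : ℤ) : S.mirror.height y k = S.height y (-k) := by
  rw [height, mirror_shift_zpow]
  rfl

theorem mirror_quiet {k : ℤ} : S.mirror.Quiet y k ↔ S.Quiet y (-k) := by
  rw [Quiet, mirror_height]
  rfl

theorem mirror_silent {k : ℤ} : S.mirror.Silent y k ↔ S.Silent y (-k) := by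
  simp only [Silent, mirror_height]
  rfl

theorem mirror_wall {a : ℤ} : S.mirror.Wall y a ↔ S.Wall y (-a) := by
  simp only [Wall, mirror_silent]
  refine ⟨fun h j hj => ?_, fun h j hj => h (-j) ?_⟩
  · simpa only [neg_neg] using h (-j) (by simp only [mirror, mem_Icc] at hj ⊢; lia)
  · simp only [mirror, mem_Icc] at hj ⊢
    lia

theorem IsGlider.of_mirror (h : S.mirror.IsGlider z) : S.IsGlider z where
  ne_zero := h.ne_zero
  homoclinic := by
    have hneg := h.homoclinic.comp neg_injective.tendsto_cofinite
    simp only [Function.comp_def, mirror_shift_zpow, neg_neg] at hneg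
    exact hneg
  exists_iterate_eq := by
    obtain ⟨n, hn, k, hk⟩ := h.exists_iterate_eq
    exact ⟨n, hn, -k, by rwa [mirror_shift_zpow] at hk⟩

theorem exists_isGlider_of_finite {Ω : Set X} (hΩ : Ω.Finite) (hne : Ω.Nonempty)
    (hzero : S.zero ∉ Ω)
    (hhom : ∀ z ∈ Ω, Tendsto (fun k : ℤ => (S.shift ^ k) z) cofinite (𝓝 S.zero))
    (hstep : ∀ z ∈ Ω, ∃ j : ℤ, (S.shift ^ j) (S.map z) ∈ Ω) : ∃ z, S.IsGlider z := by
  have := hΩ.to_subtype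
  have := hne.to_subtype
  choose! j hj using hstep
  let φ : Ω → Ω := fun z => ⟨_, hj z z.2⟩
  have hφ : ∀ n z, ∃ k : ℤ, (φ^[n] z : X) = (S.shift ^ k) (S.map^[n] z) := by
    intro n z
    induction n with
    | zero => exact ⟨0, by simp⟩
    | succ n ih =>
      obtain ⟨k, hk⟩ := ih
      refine ⟨j (φ^[n] z) + k, ?_⟩
      rw [Function.iterate_succ_apply', Function.iterate_succ_apply', ← shift_shift, ← S.map_shift,
        ← hk]
  obtain ⟨w, n, hn, hw⟩ := periodicPts_nonempty φ
  obtain ⟨k, hk⟩ := hφ n w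
  rw [hw.eq] at hk
  refine ⟨w, fun h => hzero (h ▸ w.2), hhom w w.2, n, hn, -k, ?_⟩
  nth_rw 2 [hk]
  rw [shift_shift, neg_add_cancel, zpow_zero, Homeomorph.one_apply]

variable (S) in
/-- A subsystem whose points have walls at bounded distance from all of their active
coordinates. -/
structure IsWalled (Y : Set X) (R : ℕ) : Prop where
  isClosed : IsClosed Y
  mapsTo_map : MapsTo S.map Y Y
  mapsTo_shift : ∀ k : ℤ, MapsTo (S.shift ^ k) Y Y
  exists_wall : ∀ y ∈ Y, ∀ c, ¬ S.Quiet y c → ∃ a ∈ Icc (c - R) (c + R), S.Wall y a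

variable (S) in
/-- The positions `q m` of the rightmost active coordinate of the `m`-th iterate of `y`, all
assumed to be positive. -/
def IsFront (y : X) (q : ℕ → ℤ) : Prop :=
  ∀ m, IsGreatest {k : ℤ | 0 < k ∧ ¬ S.Quiet (S.map^[m] y) k} (q m)

variable {Y : Set X} {R : ℕ} {q : ℕ → ℤ}

theorem exists_isFront (hfar : ∀ k > (R : ℤ), S.height y k ≤ S.Δ)
    (hactive : ∀ m, ∃ k > 0, ¬ S.Quiet (S.map^[m] y) k) :
    ∃ q, S.IsFront y q ∧ q 0 ≤ R + S.radius := by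
  have hquiet : ∀ k > (R + S.radius : ℤ), S.Quiet y k := fun k hk =>
    (height_le_half_and_quiet_map fun j hj => hfar j (by grind)).1.trans_lt (half_lt_self S.Δ_pos)
  have hbdd : ∀ m : ℕ, BddAbove {k : ℤ | 0 < k ∧ ¬ S.Quiet (S.map^[m] y) k} := fun m => by
    refine ⟨R + S.radius + S.radius * m, fun k ⟨_, hk⟩ => not_lt.1 fun hlt => hk ?_⟩
    exact quiet_iterate_of_Icc (a := R + S.radius + 1) (b := k + S.radius * m)
      (fun j hj => hquiet j (by grind)) m k ⟨by lia, by lia⟩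
  have hgreatest : ∀ m, ∃ q, IsGreatest {k : ℤ | 0 < k ∧ ¬ S.Quiet (S.map^[m] y) k} q := fun m => by
    obtain ⟨b, hb⟩ := hbdd m
    obtain ⟨q, hq, hmax⟩ := Int.exists_greatest_of_bdd ⟨b, fun k hk => hb hk⟩ (hactive m)
    exact ⟨q, hq, hmax⟩
  choose q hq using hgreatest
  exact ⟨q, hq, not_lt.1 fun hlt => (hq 0).1.2 (hquiet _ hlt)⟩

namespace IsFront

theorem pos (hq : S.IsFront y q) (m : ℕ) : 0 < q m := (hq m).1.1

theorem not_quiet (hq : S.IsFront y q) (m : ℕ) : ¬ S.Quiet (S.map^[m] y) (q m) := (hq m).1.2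

theorem quiet_of_lt (hq : S.IsFront y q) {m : ℕ} {k : ℤ} (hk : q m < k) :
    S.Quiet (S.map^[m] y) k := by
  by_contra h
  exact hk.not_ge ((hq m).2 ⟨(hq.pos m).trans hk, h⟩)

theorem succ_le (hq : S.IsFront y q) (m : ℕ) : q (m + 1) ≤ q m + S.radius := by
  by_contra! hlt
  refine hq.not_quiet (m + 1) ?_
  rw [Function.iterate_succ_apply']
  exact (height_le_half_and_quiet_map fun j hj => (hq.quiet_of_lt (by grind)).le).2

theorem add_le (hq : S.IsFront y q) (m t : ℕ) : q (m + t) ≤ q m + S.radius * t := by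
  induction t with
  | zero => simp
  | succ t ih =>
    have := hq.succ_le (m + t)
    rw [← add_assoc]
    lia

theorem tendsto_atTop (hq : S.IsFront y q) (hS : S.AsymptoticallyNilpotent) :
    Tendsto q atTop atTop := by
  refine Filter.tendsto_atTop.2 fun K => ?_
  filter_upwards [hS.eventually_forall_quiet y 0 K] with m hm
  by_contra! hlt
  exact hq.not_quiet m (hm _ ⟨(hq.pos m).le, hlt.le⟩)

-- Whenever the front passes a new wall, the activity between this wall and the previous one is
-- confined to a segment of bounded length, hence dies within a bounded time.
theorem exists_wall_behind [CompactSpace X] (hS : S.AsymptoticallyNilpotent)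
    (hY : S.IsWalled Y R) (hy : y ∈ Y) (hw : S.Wall y 0) (hq : S.IsFront y q)
    (hq₀ : q 0 ≤ R + S.radius) :
    ∃ T : ℕ, ∀ m, ∃ b, S.Wall (S.map^[m] y) b ∧ q m ≤ b + R + S.radius ∧
      ∀ s ≥ m + T, ∀ k ∈ Icc 0 b, S.Quiet (S.map^[s] y) k := by
  obtain ⟨T, hT⟩ := hS.exists_forall_quiet_between_walls (2 * R + 2 * S.radius)
  refine ⟨T, fun m => ?_⟩
  induction m with
  | zero =>
    refine ⟨0, hw, by simpa using hq₀, fun s _ k ⟨hk₁, hk₂⟩ => ?_⟩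
    exact le_antisymm hk₂ hk₁ ▸ hw.silent.quiet s
  | succ m ih =>
    obtain ⟨b, hb, hqb, hdead⟩ := ih
    have hb' : S.Wall (S.map^[m + 1] y) b := by
      rw [Function.iterate_succ_apply']
      exact hb.iterate 1
    obtain ⟨a, ⟨hqa, haq⟩, ha⟩ :=
      hY.exists_wall _ (hY.mapsTo_map.iterate (m + 1) hy) _ (hq.not_quiet (m + 1))
    rcases le_or_gt a b with hab | hba
    · exact ⟨b, hb', by lia, fun s hs => hdead s (by lia)⟩
    have hstep := hq.succ_le m
    refine ⟨a, ha, by lia, fun s hs k ⟨hk₁, hk₂⟩ => ?_⟩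
    rcases le_or_gt k b with hkb | hbk
    · exact hdead s (by lia) k ⟨hk₁, hkb⟩
    obtain ⟨t, rfl⟩ := Nat.exists_eq_add_of_le' ((Nat.le_add_right (m + 1) T).trans hs)
    rw [Function.iterate_add_apply]
    exact hT _ b a hb' ha (by lia) t (by lia) k ⟨hbk.le, hk₂⟩

theorem exists_quiet_behind [CompactSpace X] (hS : S.AsymptoticallyNilpotent)
    (hY : S.IsWalled Y R) (hy : y ∈ Y) (hw : S.Wall y 0) (hq : S.IsFront y q)
    (hq₀ : q 0 ≤ R + S.radius) :
    ∃ L : ℕ, ∀ᶠ m in atTop, ∀ s ≥ m, ∀ k ∈ Icc 0 (q m - L), S.Quiet (S.map^[s] y) k := by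
  obtain ⟨T, hT⟩ := hq.exists_wall_behind hS hY hy hw hq₀
  refine ⟨R + S.radius + S.radius * T, eventually_atTop.2 ⟨T, fun m hm s hs k ⟨hk₁, hk₂⟩ => ?_⟩⟩
  obtain ⟨m, rfl⟩ := Nat.exists_eq_add_of_le' hm
  obtain ⟨b, -, hqb, hdead⟩ := hT m
  have := hq.add_le m T
  push_cast at hk₂
  exact hdead s hs k ⟨hk₁, by lia⟩

end IsFront

variable (S) in
/-- The iterates of `y`, translated so that the position `q m` in the `m`-th one moves to the
origin. -/
def recentered (y : X) (q : ℕ → ℤ) (m : ℕ) : X := (S.shift ^ q m) (S.map^[m] y)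

namespace IsFront

theorem recentered_succ (y : X) (q : ℕ → ℤ) (m : ℕ) : S.recentered y q (m + 1) =
    (S.shift ^ (q (m + 1) - q m)) (S.map (S.recentered y q m)) := by
  rw [recentered, recentered, S.map_shift, shift_shift, sub_add_cancel,
    Function.iterate_succ_apply']

theorem ne_zero_of_mapClusterPt (hq : S.IsFront y q)
    (hz : MapClusterPt z atTop (S.recentered y q)) : z ≠ S.zero := by
  have hactive : ∀ m, S.recentered y q m ∈ {x | S.Quiet x 0}ᶜ := fun m h =>
    hq.not_quiet m (by simpa only [zero_add] using S.quiet_shift.1 h)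
  exact ne_zero_of_not_quiet ((S.isOpen_setOf_quiet 0 0).isClosed_compl.mem_of_mapClusterPt
    hz (.of_forall hactive))

theorem mem_supported_of_mapClusterPt (hS : S.AsymptoticallyNilpotent) (hq : S.IsFront y q) {L : ℕ}
    (hL : ∀ᶠ m in atTop, ∀ s ≥ m, ∀ k ∈ Icc 0 (q m - L), S.Quiet (S.map^[s] y) k)
    (hz : MapClusterPt z atTop (S.recentered y q)) : z ∈ S.supported (Icc (-L) 0) := by
  intro k hk
  have hclosed : IsClosed {x | S.height x k ≤ S.Δ} :=
    isClosed_le (S.continuous_height 0 k) continuous_const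
  refine hclosed.mem_of_mapClusterPt hz ?_
  filter_upwards [hL, (hq.tendsto_atTop hS).eventually_ge_atTop (-k)] with m hm hkm
  refine (S.quiet_shift.2 ?_).le
  rcases lt_or_ge 0 k with hk₀ | hk₀
  · exact hq.quiet_of_lt (by lia)
  · exact hm m le_rfl _ ⟨by lia, by grind⟩

theorem exists_isGlider [CompactSpace X] (hS : S.AsymptoticallyNilpotent) (hq : S.IsFront y q)
    {L : ℕ} (hL : ∀ᶠ m in atTop, ∀ s ≥ m, ∀ k ∈ Icc 0 (q m - L), S.Quiet (S.map^[s] y) k) :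
    ∃ z, S.IsGlider z := by
  have hstep : ∀ᶠ m in atTop, ∃ j ∈ Icc (-L : ℤ) S.radius,
      S.recentered y q (m + 1) = (S.shift ^ j) (S.map (S.recentered y q m)) := by
    filter_upwards [hL] with m hm
    refine ⟨_, ⟨?_, by linarith [hq.succ_le m]⟩, recentered_succ y q m⟩
    by_contra! hlt
    exact hq.not_quiet (m + 1) (hm (m + 1) m.le_succ _ ⟨(hq.pos _).le, by lia⟩)
  have hsupp : {z | MapClusterPt z atTop (S.recentered y q)} ⊆ S.supported (Icc (-L) 0) :=
    fun z hz => hq.mem_supported_of_mapClusterPt hS hL hz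
  refine exists_isGlider_of_finite ((finite_supported (finite_Icc _ _)).subset hsupp)
    (exists_clusterPt_of_compactSpace _) (fun h => hq.ne_zero_of_mapClusterPt h rfl)
    (fun z hz => tendsto_shift_cofinite_of_mem_supported (finite_Icc _ _) (hsupp hz))
    fun z hz => ?_
  obtain ⟨j, -, hj⟩ := exists_mapClusterPt_of_eventually_exists_eq (finite_Icc _ _)
    (fun j : ℤ => (S.shift ^ j).continuous.comp S.continuous_map) hstep hz
  exact ⟨j, hj⟩

end IsFront

namespace IsWalled

theorem mirror (hY : S.IsWalled Y R) : S.mirror.IsWalled Y R where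
  isClosed := hY.isClosed
  mapsTo_map := hY.mapsTo_map
  mapsTo_shift k := by
    rw [mirror_shift_zpow]
    exact hY.mapsTo_shift (-k)
  exists_wall y hy c hc := by
    obtain ⟨a, ha, hw⟩ := hY.exists_wall y hy (-c) (mirror_quiet.not.1 hc)
    exact ⟨-a, by grind, mirror_wall.2 (by rwa [neg_neg])⟩

theorem exists_isGlider [CompactSpace X] (hS : S.AsymptoticallyNilpotent) (hY : S.IsWalled Y R)
    (hy : y ∈ Y) (hw : S.Wall y 0) (hfar : ∀ k > (R : ℤ), S.height y k ≤ S.Δ)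
    (hactive : ∀ m, ∃ k > 0, ¬ S.Quiet (S.map^[m] y) k) : ∃ z, S.IsGlider z := by
  obtain ⟨q, hq, hq₀⟩ := exists_isFront hfar hactive
  obtain ⟨L, hL⟩ := hq.exists_quiet_behind hS hY hy hw hq₀
  exact hq.exists_isGlider hS hL

theorem exists_quiet_right_of_wall [CompactSpace X] (hS : S.AsymptoticallyNilpotent)
    (hY : S.IsWalled Y R) (hG : ∀ z, ¬ S.IsGlider z) :
    ∃ N₀ : ℕ, ∀ y ∈ Y, S.Wall y 0 → (∀ k ∈ Ioc (R : ℤ) (R + N₀), S.Quiet y k) →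
      ∃ m ≤ N₀, ∀ k ∈ Icc (1 : ℤ) (R + S.radius * (m + 1)), S.Quiet (S.map^[m] y) k := by
  let U : ℕ → Set X := fun m =>
    {y | ∀ k ∈ Icc (1 : ℤ) (R + S.radius * (m + 1)), S.Quiet (S.map^[m] y) k} ∪
      ⋃ k ∈ Ioc (R : ℤ) (R + m), {y | S.Δ < S.height y k}
  have hU : ∀ m, IsOpen (U m) := fun m => (S.isOpen_setOf_forall_quiet m _ _).union <|
    isOpen_biUnion fun k _ => isOpen_lt continuous_const (S.continuous_height 0 k)
  have hcover : Y ∩ {y | S.Wall y 0} ⊆ ⋃ m, U m := by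
    rintro y ⟨hy, hw⟩
    by_contra hyU
    simp only [U, mem_iUnion, mem_union, not_exists, not_or] at hyU
    obtain ⟨z, hz⟩ := hY.exists_isGlider hS hy hw
      (fun k hk => not_lt.1 ((hyU (k - R).toNat).2 k ⟨hk, by lia⟩)) fun m => by
        by_contra! hdead
        exact (hyU m).1 fun k hk => hdead k (by grind)
    exact hG z hz
  obtain ⟨N₀, hN₀⟩ := exists_nat_forall_mem_exists_le
    (hY.isClosed.inter (S.isClosed_setOf_wall 0)).isCompact hU hcover
  refine ⟨N₀, fun y hy hw hquiet => ?_⟩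
  obtain ⟨m, hm, hdead | hfar⟩ := hN₀ y ⟨hy, hw⟩
  · exact ⟨m, hm, hdead⟩
  · obtain ⟨k, hk, hlt⟩ := mem_iUnion₂.1 hfar
    exact absurd (hquiet k (by grind)) hlt.not_gt

end IsWalled

variable (S) in
/-- After `N` steps all activity to the right of a wall is gone, up to what enters from beyond the
right end of the stretch of quiet coordinates that begins at distance `R` from the wall. -/
def ClearsRight (Y : Set X) (R N : ℕ) : Prop :=
  ∀ y ∈ Y, ∀ a e : ℤ, S.Wall y a → N ≤ e → (∀ k ∈ Ioc (a + R) (a + R + e), S.Quiet y k) →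
    ∀ k ∈ Icc a (a + R + e - S.radius * N), S.Quiet (S.map^[N] y) k

theorem IsWalled.eventually_clearsRight [CompactSpace X] (hS : S.AsymptoticallyNilpotent)
    (hY : S.IsWalled Y R) (hG : ∀ z, ¬ S.IsGlider z) : ∀ᶠ N in atTop, S.ClearsRight Y R N := by
  obtain ⟨N₀, hN₀⟩ := hY.exists_quiet_right_of_wall hS hG
  refine eventually_atTop.2 ⟨N₀, fun N hN y hy a e hw hNe hquiet k hk => ?_⟩
  obtain ⟨m, hm, hnear⟩ := hN₀ ((S.shift ^ a) y) (hY.mapsTo_shift a hy)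
    (S.wall_shift.2 (by rwa [zero_add])) fun j hj => S.quiet_shift.2 (hquiet _ (by grind))
  simp only [quiet_iterate_shift] at hnear
  have hm_quiet : ∀ j ∈ Icc a (a + R + e - S.radius * m), S.Quiet (S.map^[m] y) j := by
    rintro j ⟨haj, hje⟩
    rcases haj.eq_or_lt with rfl | haj
    · exact hw.silent.quiet m
    rcases le_or_gt j (a + R + S.radius * (m + 1)) with hj | hj
    · simpa only [sub_add_cancel] using hnear (j - a) ⟨by lia, by lia⟩
    · exact quiet_iterate_of_Icc (a := a + R + 1) (b := a + R + e)
        (fun i hi => hquiet i (by grind)) m j ⟨by lia, by lia⟩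
  obtain ⟨t, rfl⟩ := Nat.exists_eq_add_of_le' (hm.trans hN)
  rw [Function.iterate_add_apply]
  refine (hw.iterate m).quiet_iterate_of_Icc hm_quiet t k ⟨hk.1, ?_⟩
  have := hk.2
  push_cast at this
  lia

variable (S) in
/-- The coordinate `c` lies between two walls at distance at most `L` from each other. -/
def Enclosed (L : ℤ) (y : X) (c : ℤ) : Prop :=
  ∃ a b, a ≤ c ∧ c ≤ b ∧ b ≤ a + L ∧ S.Wall y a ∧ S.Wall y b

theorem mirror_enclosed {L c : ℤ} : S.mirror.Enclosed L y c ↔ S.Enclosed L y (-c) := by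
  simp only [Enclosed, mirror_wall]
  constructor
  · rintro ⟨a, b, hac, hcb, hba, ha, hb⟩
    exact ⟨-b, -a, by lia, by lia, by lia, hb, ha⟩
  · rintro ⟨a, b, hac, hcb, hba, ha, hb⟩
    exact ⟨-b, -a, by lia, by lia, by lia, by rwa [neg_neg], by rwa [neg_neg]⟩

theorem Enclosed.iterate {L c : ℤ} (h : S.Enclosed L y c) (m : ℕ) :
    S.Enclosed L (S.map^[m] y) c := by
  obtain ⟨a, b, hac, hcb, hba, ha, hb⟩ := h
  exact ⟨a, b, hac, hcb, hba, ha.iterate m, hb.iterate m⟩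

theorem quiet_iterate_of_not_enclosed {L : ℤ} (h : ∀ c, S.Enclosed L y c ∨ S.Quiet y c) (t : ℕ) :
    ∀ c ∈ {c | ¬ S.Enclosed L y c}, S.Quiet (S.map^[t] y) c := by
  refine quiet_iterate_of_guarded (P := fun _ => {c | ¬ S.Enclosed L y c})
    (fun c hc => (h c).resolve_left hc) (fun _ c hc j ⟨hcj, hjc⟩ => ?_) t
  refine or_iff_not_imp_left.2 fun hj => ?_
  obtain ⟨a, b, haj, hjb, hba, ha, hb⟩ := not_not.1 hj
  rcases lt_or_ge c a with hca | hac
  · exact ha j ⟨by lia, by lia⟩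
  rcases lt_or_ge b c with hbc | hcb
  · exact hb j ⟨by lia, by lia⟩
  · exact absurd ⟨a, b, hac, hcb, hba, ha, hb⟩ hc

namespace IsWalled

theorem enclosed_or_quiet_of_wall (hY : S.IsWalled Y R) {N H : ℕ} (hN : S.ClearsRight Y R N)
    (hy : y ∈ Y) {a₀ c : ℤ} (ha₀ : a₀ ∈ Icc (c - H) c) (hw : S.Wall y a₀) :
    S.Enclosed (2 * R + (N + H + S.radius * N)) y c ∨ S.Quiet (S.map^[N] y) c := by
  obtain ⟨a, ⟨hac, ha⟩, hmax⟩ := Int.exists_greatest_of_bdd (P := fun a => a ≤ c ∧ S.Wall y a)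
    ⟨c, fun _ h => h.1⟩ ⟨a₀, ha₀.2, hw⟩
  have haH : c - H ≤ a := ha₀.1.trans (hmax a₀ ⟨ha₀.2, hw⟩)
  by_cases hquiet : ∀ k ∈ Ioc (a + R) (a + R + (N + H + S.radius * N)), S.Quiet y k
  · exact .inr (hN y hy a _ ha (by lia) hquiet c ⟨hac, by lia⟩)
  · push Not at hquiet
    obtain ⟨k, ⟨hak, hke⟩, hk⟩ := hquiet
    obtain ⟨b, ⟨hkb, hbk⟩, hb⟩ := hY.exists_wall y hy k hk
    have hcb : c < b := not_le.1 fun hbc => (hmax b ⟨hbc, hb⟩).not_gt (by lia)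
    exact .inl ⟨a, b, hac, hcb.le, by lia, ha, hb⟩

theorem enclosed_or_quiet (hY : S.IsWalled Y R) {N : ℕ} (hN : S.ClearsRight Y R N)
    (hN' : S.mirror.ClearsRight Y R N) (hy : y ∈ Y) (c : ℤ) :
    S.Enclosed (2 * R + (N + (R + S.radius * N : ℕ) + S.radius * N)) y c ∨
      S.Quiet (S.map^[N] y) c := by
  by_cases hleft : ∃ a ∈ Icc (c - (R + S.radius * N : ℕ)) c, S.Wall y a
  · obtain ⟨a, ha, hw⟩ := hleft
    exact hY.enclosed_or_quiet_of_wall hN hy ha hw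
  by_cases hright : ∃ b ∈ Icc c (c + (R + S.radius * N : ℕ)), S.Wall y b
  · obtain ⟨b, ⟨hcb, hbc⟩, hw⟩ := hright
    have h := hY.mirror.enclosed_or_quiet_of_wall hN' hy (c := -c) (H := R + S.radius * N)
      (a₀ := -b) ⟨by lia, by lia⟩ (mirror_wall.2 (by rwa [neg_neg]))
    rwa [mirror_enclosed, mirror_quiet, neg_neg] at h
  · refine .inr (quiet_iterate_of_Icc (a := c - S.radius * N) (b := c + S.radius * N)
      (fun k ⟨hk₁, hk₂⟩ => ?_) N c ⟨by lia, by lia⟩)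
    by_contra hk
    obtain ⟨a, ⟨ha₁, ha₂⟩, hw⟩ := hY.exists_wall y hy k hk
    rcases le_total a c with hac | hca
    · exact hleft ⟨a, ⟨by push_cast; lia, hac⟩, hw⟩
    · exact hright ⟨a, ⟨hca, by push_cast; lia⟩, hw⟩

theorem exists_iterate_eq_zero [CompactSpace X] (hS : S.AsymptoticallyNilpotent)
    (hY : S.IsWalled Y R) (hG : ∀ z, ¬ S.IsGlider z) : ∃ M, ∀ y ∈ Y, S.map^[M] y = S.zero := by
  obtain ⟨N, hN, hN'⟩ := ((hY.eventually_clearsRight hS hG).and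
    (hY.mirror.eventually_clearsRight (S := S.mirror) hS fun z hz => hG z hz.of_mirror)).exists
  obtain ⟨T, hT⟩ := hS.exists_forall_quiet_between_walls
    (2 * R + (N + (R + S.radius * N : ℕ) + S.radius * N))
  refine ⟨T + N, fun y hy => eq_zero_of_forall_quiet fun c => ?_⟩
  rw [Function.iterate_add_apply]
  have hsplit := fun k => (hY.enclosed_or_quiet hN hN' hy k).imp_left (Enclosed.iterate · N)
  by_cases hc : S.Enclosed (2 * R + (N + (R + S.radius * N : ℕ) + S.radius * N)) (S.map^[N] y) c
  · obtain ⟨a, b, hac, hcb, hba, ha, hb⟩ := hc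
    exact hT _ a b ha hb hba T le_rfl c ⟨hac, hcb⟩
  · exact quiet_iterate_of_not_enclosed hsplit T c hc

end IsWalled

variable (S) in
/-- The backward orbits of the endomorphism, each of them an infinite past of its initial entry. -/
def backwardOrbits : Set (ℕ → X) := {h | ∀ i, S.map (h (i + 1)) = h i}

variable (S) in
/-- The sequences whose initial entry is active at the origin. -/
def activeAtOrigin : Set (ℕ → X) := {h | ¬ S.Quiet (h 0) 0}

variable (S) in
/-- Moves a backward orbit `p.1` coordinates to the left and `p.2` steps into the past. -/
def slide (p : ℤ × ℕ) (h : ℕ → X) : ℕ → X := fun i => (S.shift ^ p.1) (h (i + p.2))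

theorem continuous_slide (p : ℤ × ℕ) : Continuous (S.slide p) :=
  continuous_pi fun _ => (S.shift ^ p.1).continuous.comp (continuous_apply _)

theorem slide_slide (p p' : ℤ × ℕ) (h : ℕ → X) :
    S.slide p (S.slide p' h) = S.slide (p + p') h := by
  funext i
  rw [slide, slide, slide, shift_shift, Prod.fst_add, Prod.snd_add, add_assoc]

theorem slide_apply_zero (k : ℤ) (t : ℕ) (h : ℕ → X) :
    S.slide (k, t) h 0 = (S.shift ^ k) (h t) := by
  rw [slide, zero_add]

theorem isClosed_backwardOrbits : IsClosed S.backwardOrbits := by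
  simp only [backwardOrbits, ofPred_forall]
  exact isClosed_iInter fun i =>
    isClosed_eq (S.continuous_map.comp (continuous_apply _)) (continuous_apply _)

theorem isClosed_activeAtOrigin : IsClosed S.activeAtOrigin :=
  (S.isOpen_setOf_quiet 0 0).isClosed_compl.preimage (continuous_apply (A := fun _ => X) 0)

theorem mapsTo_slide_backwardOrbits (p : ℤ × ℕ) :
    MapsTo (S.slide p) S.backwardOrbits S.backwardOrbits := fun h hh i => by
  rw [slide, slide, S.map_shift, add_right_comm, hh]

theorem iterate_apply_of_mem_backwardOrbits {h : ℕ → X} (hh : h ∈ S.backwardOrbits) (t : ℕ) :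
    S.map^[t] (h t) = h 0 := by
  induction t with
  | zero => rfl
  | succ t ih => rw [Function.iterate_succ_apply, hh t, ih]

theorem exists_slide_mem_activeAtOrigin {h : ℕ → X} (hh : h ∈ S.backwardOrbits)
    (h₀ : h 0 ≠ S.zero) (t : ℕ) : ∃ k, S.slide (k, t) h ∈ S.activeAtOrigin := by
  have ht : h t ≠ S.zero := fun ht => h₀ <| by
    rw [← iterate_apply_of_mem_backwardOrbits hh t, ht, Function.iterate_fixed S.map_zero]
  obtain ⟨k, hk⟩ := exists_not_quiet ht
  refine ⟨k, fun hq => hk ?_⟩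
  rwa [slide_apply_zero, quiet_shift, zero_add] at hq

theorem isInvariantMeeting_backwardOrbits [CompactSpace X]
    (hnn : ∀ n, ∃ x, S.map^[n] x ≠ S.zero) :
    IsInvariantMeeting S.slide S.activeAtOrigin S.backwardOrbits where
  isClosed := isClosed_backwardOrbits
  mapsTo := mapsTo_slide_backwardOrbits
  nonempty_inter := by
    have hactive : ∀ n, ∃ x, S.map^[n] x ∈ {x | S.Quiet x 0}ᶜ := fun n => by
      obtain ⟨x, hx⟩ := hnn n
      obtain ⟨k, hk⟩ := exists_not_quiet hx
      refine ⟨(S.shift ^ k) x, fun hq => hk ?_⟩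
      rw [← zero_add k]
      exact S.quiet_iterate_shift.1 hq
    obtain ⟨h, hh, h₀⟩ := exists_backward_orbit_of_forall_exists_iterate_mem S.continuous_map
      (S.isOpen_setOf_quiet 0 0).isClosed_compl hactive
    exact ⟨h, hh, h₀⟩

section Minimal

variable {M : Set (ℕ → X)}

theorem subset_closure_slide_of_minimal
    (hM : Minimal (IsInvariantMeeting S.slide S.activeAtOrigin) M) (hMB : M ⊆ S.backwardOrbits)
    {h : ℕ → X} (hh : h ∈ M) (h₀ : h 0 ≠ S.zero) (n : ℕ) :
    M ⊆ closure ((fun p => S.slide p h) '' {p | n ≤ p.2}) := by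
  obtain ⟨k, hk⟩ := exists_slide_mem_activeAtOrigin (hMB hh) h₀ n
  refine IsInvariantMeeting.subset_closure_of_minimal continuous_slide hM ?_ ?_
    ⟨_, mem_image_of_mem _ (le_refl n), hk⟩
  · rintro _ ⟨p, -, rfl⟩
    exact hM.1.mapsTo p hh
  · rintro p _ ⟨p', hp', rfl⟩
    exact ⟨p + p', Nat.le_add_left_of_le hp', (slide_slide p p' h).symm⟩

theorem exists_wall_of_minimal [CompactSpace X] (hS : S.AsymptoticallyNilpotent)
    (hM : Minimal (IsInvariantMeeting S.slide S.activeAtOrigin) M) (hMB : M ⊆ S.backwardOrbits) :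
    ∃ R : ℕ, ∀ h ∈ M, h ∈ S.activeAtOrigin → ∃ a ∈ Icc (-R : ℤ) R, S.Wall (h 0) a := by
  obtain ⟨n, V, hV, ⟨g, hgV, hgM⟩, hVM⟩ := exists_isOpen_inter_subset_of_subset_iUnion
    hM.1.isClosed.isCompact (hM.1.nonempty_inter.mono inter_subset_left)
    (C := fun n => {h | S.Wall (S.map^[n] (h 0)) 0})
    (fun n => (S.isClosed_setOf_wall 0).preimage
      ((S.continuous_map.iterate n).comp (continuous_apply 0)))
    (fun h _ => mem_iUnion.2 (hS.exists_wall_iterate (h 0) 0))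
  obtain ⟨R, hR⟩ := exists_nat_forall_mem_exists_le
    (hM.1.isClosed.inter isClosed_activeAtOrigin).isCompact
    (U := fun R => ⋃ k ∈ Icc (-R : ℤ) R, ⋃ t ≥ n, S.slide (k, t) ⁻¹' V)
    (fun R => isOpen_biUnion fun k _ => isOpen_biUnion fun t _ => hV.preimage (continuous_slide _))
    fun h hh => by
      obtain ⟨_, hpV, ⟨k, t⟩, ht, rfl⟩ := mem_closure_iff.1
        (subset_closure_slide_of_minimal hM hMB hh.1 (ne_zero_of_not_quiet hh.2) n hgM) V hV hgV
      simp only [mem_iUnion]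
      exact ⟨k.natAbs, k, ⟨by lia, by lia⟩, t, ht, hpV⟩
  refine ⟨R, fun h hh h₀ => ?_⟩
  obtain ⟨R', hR', hmem⟩ := hR h ⟨hh, h₀⟩
  simp only [mem_iUnion] at hmem
  obtain ⟨k, ⟨hk₁, hk₂⟩, t, ht, hV'⟩ := hmem
  have hw : S.Wall (S.map^[n] (h t)) k := by
    simpa only [mem_ofPred_eq, slide_apply_zero, iterate_shift, wall_shift, zero_add] using
      hVM ⟨hV', hM.1.mapsTo (k, t) hh⟩
  obtain ⟨s, rfl⟩ := Nat.exists_eq_add_of_le' ht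
  refine ⟨k, ⟨by lia, by lia⟩, ?_⟩
  rw [← iterate_apply_of_mem_backwardOrbits (hMB hh) (s + n), Function.iterate_add_apply]
  exact hw.iterate s

theorem subset_image_slide_of_minimal [CompactSpace X]
    (hM : Minimal (IsInvariantMeeting S.slide S.activeAtOrigin) M) (hMB : M ⊆ S.backwardOrbits) :
    M ⊆ S.slide (0, 1) '' M := by
  obtain ⟨h, hh, h₀⟩ := hM.1.nonempty_inter
  obtain ⟨k, hk⟩ := exists_slide_mem_activeAtOrigin (hMB hh) (ne_zero_of_not_quiet h₀) 1
  refine IsInvariantMeeting.subset_image_of_minimal continuous_slide hM (fun p g => ?_)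
    ⟨_, mem_image_of_mem _ (hM.1.mapsTo (k, 0) hh), ?_⟩
  · rw [slide_slide, slide_slide, add_comm]
  · rwa [slide_slide, Prod.mk_add_mk, zero_add, add_zero]

theorem isWalled_image_of_minimal [CompactSpace X] (hS : S.AsymptoticallyNilpotent)
    (hM : Minimal (IsInvariantMeeting S.slide S.activeAtOrigin) M) (hMB : M ⊆ S.backwardOrbits) :
    ∃ R, S.IsWalled ((· 0) '' M) R := by
  obtain ⟨R, hR⟩ := exists_wall_of_minimal hS hM hMB
  refine ⟨R, (hM.1.isClosed.isCompact.image (continuous_apply 0)).isClosed, ?_, ?_, ?_⟩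
  · rintro _ ⟨h, hh, rfl⟩
    obtain ⟨g, hg, rfl⟩ := subset_image_slide_of_minimal hM hMB hh
    exact ⟨g, hg, by simp only [slide_apply_zero, zpow_zero, Homeomorph.one_apply, hMB hg 0]⟩
  · rintro k _ ⟨h, hh, rfl⟩
    exact ⟨S.slide (k, 0) h, hM.1.mapsTo _ hh, slide_apply_zero k 0 h⟩
  · rintro _ ⟨h, hh, rfl⟩ c hc
    obtain ⟨a, ⟨ha₁, ha₂⟩, hw⟩ := hR (S.slide (c, 0) h) (hM.1.mapsTo _ hh)
      (by rwa [activeAtOrigin, mem_ofPred_eq, slide_apply_zero, quiet_shift, zero_add])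
    rw [slide_apply_zero, wall_shift] at hw
    exact ⟨a + c, ⟨by lia, by lia⟩, hw⟩

end Minimal

theorem AsymptoticallyNilpotent.exists_isGlider [CompactSpace X] (hS : S.AsymptoticallyNilpotent)
    (hnn : ∀ n, ∃ x, S.map^[n] x ≠ S.zero) : ∃ z, S.IsGlider z := by
  obtain ⟨M, hMB, hM⟩ := (isInvariantMeeting_backwardOrbits hnn).exists_minimal_subset
    isClosed_activeAtOrigin
  obtain ⟨R, hY⟩ := isWalled_image_of_minimal hS hM hMB
  by_contra! hG
  obtain ⟨n, hn⟩ := hY.exists_iterate_eq_zero hS hG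
  obtain ⟨h, hh, h₀⟩ := hM.1.nonempty_inter
  refine ne_zero_of_not_quiet h₀ ?_
  rw [← iterate_apply_of_mem_backwardOrbits (hMB hh) n]
  refine hn _ ⟨S.slide (0, n) h, hM.1.mapsTo _ hh, ?_⟩
  simp only [slide_apply_zero, zpow_zero, Homeomorph.one_apply]

variable (S) in
/-- Every point of the orbit of `x` is `ε`-close to some point of the orbit of `z`, without any
synchronisation between the two orbits. -/
def Shadows (ε : ℝ) (x z : X) : Prop :=
  ∀ m : ℤ, ∃ j : ℤ, dist ((S.shift ^ m) x) ((S.shift ^ j) z) < ε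

theorem Shadows.mono {ε ε' : ℝ} (h : S.Shadows ε x z) (hε : ε ≤ ε') : S.Shadows ε' x z := fun m =>
  (h m).imp fun _ hj => hj.trans_le hε

theorem Shadows.mirror {ε : ℝ} (h : S.Shadows ε x z) : S.mirror.Shadows ε x z := fun m => by
  obtain ⟨j, hj⟩ := h (-m)
  exact ⟨-j, by rwa [mirror_shift_zpow, mirror_shift_zpow, neg_neg]⟩

theorem iterate_mul_eq_shift {n : ℕ} {k : ℤ} (h : S.map^[n] x = (S.shift ^ k) x) (t : ℕ) :
    S.map^[n * t] x = (S.shift ^ (k * t)) x := by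
  induction t with
  | zero => simp
  | succ t ih =>
    rw [Nat.mul_succ, Function.iterate_add_apply, h, iterate_shift, ih, shift_shift]
    push_cast
    rw [mul_add_one, add_comm]

theorem exists_iterate_eq_shift_of_shadows [CompactSpace X] {n : ℕ} {k : ℤ}
    (hz : S.map^[n] z = (S.shift ^ k) z) :
    ∃ ε > 0, ∀ x, S.Shadows ε x z → S.map^[n] x = (S.shift ^ k) x := by
  obtain ⟨ε₁, hε₁, hmap⟩ := Metric.uniformContinuous_iff.1
    (CompactSpace.uniformContinuous_of_continuous (S.continuous_map.iterate n)) _ (half_pos S.Δ_pos)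
  obtain ⟨ε₂, hε₂, hshift⟩ := Metric.uniformContinuous_iff.1
    (CompactSpace.uniformContinuous_of_continuous (S.shift ^ k).continuous) _ (half_pos S.Δ_pos)
  refine ⟨min ε₁ ε₂, lt_min hε₁ hε₂, fun x hx => S.expansive _ _ fun m => ?_⟩
  obtain ⟨j, hj⟩ := hx m
  have hzj : S.map^[n] ((S.shift ^ j) z) = (S.shift ^ k) ((S.shift ^ j) z) := by
    rw [iterate_shift, hz, shift_shift, shift_shift, add_comm]
  have h₁ := hmap (hj.trans_le (min_le_left _ _))
  have h₂ := hshift (hj.trans_le (min_le_right _ _))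
  rw [hzj, iterate_shift] at h₁
  rw [shift_shift, add_comm, ← shift_shift] at h₂
  exact (dist_triangle_right _ _ _).trans ((add_lt_add h₁ h₂).trans_eq (add_halves _)).le

namespace AsymptoticallyNilpotent

theorem tendsto_shift_atTop (hS : S.AsymptoticallyNilpotent) {n : ℕ} {k : ℤ} (hn : 0 < n)
    (hk : 0 < k) (h : S.map^[n] x = (S.shift ^ k) x) :
    Tendsto (fun m : ℤ => (S.shift ^ m) x) atTop (𝓝 S.zero) := by
  refine Metric.tendsto_nhds.2 fun ε hε => ?_
  have hresidues : ∀ᶠ t in atTop, ∀ j ∈ Ico 0 k, S.height (S.map^[t] x) j < ε :=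
    (eventually_all_finite (finite_Ico 0 k)).2 fun j _ => hS.eventually_height_lt x j hε
  obtain ⟨N, hN⟩ := eventually_atTop.1 hresidues
  filter_upwards [eventually_ge_atTop (k * N)] with m hm
  have hdiv : (N : ℤ) ≤ m / k := (Int.le_ediv_iff_mul_le hk).2 (by rwa [mul_comm])
  obtain ⟨t, ht⟩ := Int.eq_ofNat_of_zero_le ((Nat.cast_nonneg N).trans hdiv)
  have hm' : (S.shift ^ m) x = (S.shift ^ (m % k)) (S.map^[n * t] x) := by
    rw [iterate_mul_eq_shift h, shift_shift, ← ht, Int.emod_add_mul_ediv]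
  rw [hm']
  exact hN (n * t) ((by lia : N ≤ t).trans (Nat.le_mul_of_pos_left t hn)) _
    ⟨Int.emod_nonneg m hk.ne', Int.emod_lt_of_pos m hk⟩

theorem eq_zero_of_iterate_eq_self (hS : S.AsymptoticallyNilpotent) {n : ℕ} (hn : 0 < n)
    (h : S.map^[n] z = z) : z = S.zero := by
  have hconst : ∀ t : ℕ, S.map^[n * t] z = z := fun t => by
    rw [Function.iterate_mul]
    exact Function.iterate_fixed h t
  have hlim := (hS z).comp (tendsto_id.const_mul_atTop' hn)
  simp only [Function.comp_def, id_eq, hconst] at hlim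
  exact tendsto_nhds_unique tendsto_const_nhds hlim

theorem exists_finite_returns [CompactSpace X] (hS : S.AsymptoticallyNilpotent)
    (hz : z ≠ S.zero) {n : ℕ} {k : ℤ} (hn : 0 < n) (hk : 0 < k)
    (h : S.map^[n] z = (S.shift ^ k) z) :
    ∃ ε > 0, ∀ x, S.Shadows ε x z → {m : ℤ | 0 < m ∧ dist ((S.shift ^ m) x) z < ε}.Finite := by
  obtain ⟨ε, hε, hshadow⟩ := exists_iterate_eq_shift_of_shadows h
  have hδ : 0 < dist z S.zero / 2 := half_pos (dist_pos.2 hz)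
  refine ⟨min ε (dist z S.zero / 2), lt_min hε hδ, fun x hx => ?_⟩
  have hlim := hS.tendsto_shift_atTop hn hk (hshadow x (hx.mono (min_le_left _ _)))
  obtain ⟨N, hN⟩ := eventually_atTop.1 (Metric.tendsto_nhds.1 hlim _ hδ)
  refine (finite_Ioo 0 N).subset fun m ⟨hm, hmz⟩ => ⟨hm, not_le.1 fun hNm => ?_⟩
  have hfar := dist_triangle_left z S.zero ((S.shift ^ m) x)
  linarith [hN m hNm, hmz.trans_le (min_le_right ε (dist z S.zero / 2))]

end AsymptoticallyNilpotent

theorem IsGlider.exists_finite_returns [CompactSpace X] (hz : S.IsGlider z)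
    (hS : S.AsymptoticallyNilpotent) :
    ∃ ε > 0,
      (∀ x, S.Shadows ε x z → {m : ℤ | 0 < m ∧ dist ((S.shift ^ m) x) z < ε}.Finite) ∨
      ∀ x, S.Shadows ε x z → {m : ℤ | m < 0 ∧ dist ((S.shift ^ m) x) z < ε}.Finite := by
  obtain ⟨n, hn, k, hk⟩ := hz.exists_iterate_eq
  rcases lt_trichotomy k 0 with hneg | rfl | hpos
  · obtain ⟨ε, hε, hfin⟩ := AsymptoticallyNilpotent.exists_finite_returns (S := S.mirror) hS
      hz.ne_zero hn (neg_pos.2 hneg) (by rwa [mirror_shift_zpow, neg_neg])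
    refine ⟨ε, hε, .inr fun x hx => ?_⟩
    exact ((hfin x hx.mirror).image Neg.neg).subset fun m ⟨hm, hmz⟩ =>
      ⟨-m, ⟨neg_pos.2 hm, by rwa [mirror_shift_zpow, neg_neg]⟩, neg_neg m⟩
  · exact absurd (hS.eq_zero_of_iterate_eq_self hn (by simpa using hk)) hz.ne_zero
  · obtain ⟨ε, hε, hfin⟩ := hS.exists_finite_returns hz.ne_zero hn hpos hk
    exact ⟨ε, hε, .inl hfin⟩

end ExpansiveEndo

theorem homeomorph_vadd_zpow {G X : Type*} [TopologicalSpace X] [AddGroup G] [AddAction G X]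
    [ContinuousConstVAdd G X] (g : G) (n : ℤ) :
    (Homeomorph.vadd g : X ≃ₜ X) ^ n = Homeomorph.vadd (n • g) := by
  induction n with
  | zero => ext x; simp
  | succ n ih => ext x; simp [zpow_add_one, ih, add_zsmul, add_vadd]
  | pred n ih => ext x; simp [sub_eq_add_neg, zpow_add, ih, add_zsmul, add_vadd]

section AddAction

variable {X : Type*} [MetricSpace X] [CompactSpace X] [AddAction ℤ X] {x₀ : X} {Δ : ℝ} {f : X → X}

theorem exists_forall_dist_le_half (hcont : ∀ n : ℤ, Continuous (n +ᵥ · : X → X))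
    (hx₀ : ∀ n : ℤ, n +ᵥ x₀ = x₀) (hΔ : 0 < Δ)
    (hexp : ∀ x y : X, (∀ n : ℤ, dist (n +ᵥ x) (n +ᵥ y) ≤ Δ) → x = y)
    (hf : Continuous f) (hf₀ : f x₀ = x₀) :
    ∃ r : ℕ, ∀ y, (∀ j ∈ Set.Icc (-r : ℤ) r, dist (j +ᵥ y) x₀ ≤ Δ) →
      dist y x₀ ≤ Δ / 2 ∧ dist (f y) x₀ ≤ Δ / 2 := by
  obtain ⟨δ, hδ, hfδ⟩ := Metric.continuousAt_iff.1 hf.continuousAt (Δ / 2) (half_pos hΔ)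
  obtain ⟨F, hF⟩ := exists_finset_forall_dist_lt hcont hexp (lt_min hδ (half_pos hΔ))
  refine ⟨F.sup Int.natAbs, fun y hy => ?_⟩
  have hclose : dist y x₀ < min δ (Δ / 2) := hF y x₀ fun j hj => by
    have hjr : j.natAbs ≤ F.sup Int.natAbs := Finset.le_sup hj
    rw [hx₀]
    exact hy j ⟨by lia, by lia⟩
  have hfy := hfδ (hclose.trans_le (min_le_left _ _))
  rw [hf₀] at hfy
  exact ⟨(hclose.trans_le (min_le_right _ _)).le, hfy.le⟩

theorem exists_expansiveEndo (hcont : ∀ n : ℤ, Continuous (n +ᵥ · : X → X))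
    (hx₀ : ∀ n : ℤ, n +ᵥ x₀ = x₀) (hΔ : 0 < Δ)
    (hexp : ∀ x y : X, (∀ n : ℤ, dist (n +ᵥ x) (n +ᵥ y) ≤ Δ) → x = y)
    (hf : Continuous f) (hf₀ : f x₀ = x₀) (hfeq : ∀ (n : ℤ) x, f (n +ᵥ x) = n +ᵥ f x) :
    ∃ S : ExpansiveEndo X, S.zero = x₀ ∧ S.map = f ∧ ∀ (n : ℤ) x, (S.shift ^ n) x = n +ᵥ x := by
  have : ContinuousConstVAdd ℤ X := ⟨hcont⟩
  have hshift : ∀ (n : ℤ) (x : X), ((Homeomorph.vadd (1 : ℤ) : X ≃ₜ X) ^ n) x = n +ᵥ x :=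
    fun n x => by rw [homeomorph_vadd_zpow, zsmul_one, Int.cast_id, Homeomorph.vadd_apply]
  obtain ⟨r, hr⟩ := exists_forall_dist_le_half hcont hx₀ hΔ hexp hf hf₀
  exact ⟨{
    shift := Homeomorph.vadd (1 : ℤ)
    zero := x₀
    map := f
    Δ := Δ
    radius := r
    shift_zero := fun k => by rw [hshift, hx₀]
    map_zero := hf₀
    Δ_pos := hΔ
    expansive := fun x y h => hexp x y fun n => by simpa only [hshift] using h n
    continuous_map := hf
    map_shift := fun k x => by rw [hshift, hshift, hfeq]
    dist_le_half := fun y h => hr y fun j hj => by simpa only [hshift] using h j hj }, rfl, rfl,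
    hshift⟩

end AddAction

/-- Let `(ℤ, X, 0)` be an expansive pointed `ℤ`-dynamical system such
that for each homoclinic point `x` and every `ε > 0` there are points `x¹, x²` whose
orbits `ε`-shadow translates of `x` at every time, with `k = 0` admissible for
infinitely many positive times for `x¹` and infinitely many negative times for `x²`.
Then every asymptotically nilpotent endomorphism of the system is nilpotent. -/
theorem statement14 {X : Type} [MetricSpace X] [CompactSpace X] [AddAction ℤ X]
    (hcont : ∀ n : ℤ, Continuous fun x : X => n +ᵥ x)
    (x₀ : X) (hx₀ : ∀ n : ℤ, n +ᵥ x₀ = x₀)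
    (hexp : ∃ Δ : ℝ, 0 < Δ ∧
      ∀ x y : X, (∀ n : ℤ, dist (n +ᵥ x) (n +ᵥ y) ≤ Δ) → x = y)
    (hrec : ∀ x : X,
      (∀ ε : ℝ, 0 < ε → ∃ E : Finset ℤ, ∀ n : ℤ, n ∉ E → dist (n +ᵥ x) x₀ < ε) →
      ∀ ε : ℝ, 0 < ε → ∃ x1 x2 : X,
        (∀ n : ℤ, ∃ k : ℤ, dist (n +ᵥ x1) (k +ᵥ x) < ε) ∧
        (∀ n : ℤ, ∃ k : ℤ, dist (n +ᵥ x2) (k +ᵥ x) < ε) ∧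
        {n : ℤ | 0 < n ∧ dist (n +ᵥ x1) x < ε}.Infinite ∧
        {n : ℤ | n < 0 ∧ dist (n +ᵥ x2) x < ε}.Infinite)
    (f : X → X) (hf : Continuous f) (hf₀ : f x₀ = x₀)
    (hfeq : ∀ (n : ℤ) (x : X), f (n +ᵥ x) = n +ᵥ f x)
    (hAN : ∀ x : X, Filter.Tendsto (fun n => f^[n] x) Filter.atTop (nhds x₀)) :
    ∃ n : ℕ, ∀ x : X, f^[n] x = x₀ := by
  obtain ⟨Δ, hΔ, hexp⟩ := hexp
  obtain ⟨S, rfl, rfl, hshift⟩ := exists_expansiveEndo hcont hx₀ hΔ hexp hf hf₀ hfeq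
  by_contra! hnn
  obtain ⟨z, hz⟩ := ExpansiveEndo.AsymptoticallyNilpotent.exists_isGlider hAN hnn
  obtain ⟨ε, hε, hfin⟩ := hz.exists_finite_returns hAN
  simp only [← hshift] at hrec
  have hhom : ∀ δ > 0, ∃ E : Finset ℤ, ∀ n ∉ E, dist ((S.shift ^ n) z) S.zero < δ := fun δ hδ => by
    have hfinite := Filter.eventually_cofinite.1 (Metric.tendsto_nhds.1 hz.homoclinic δ hδ)
    exact ⟨hfinite.toFinset, fun n hn => by simpa using hn⟩
  obtain ⟨x₁, x₂, hx₁, hx₂, hpos, hneg⟩ := hrec z hhom ε hε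
  exact hfin.elim (fun h => hpos (h x₁ hx₁)) fun h => hneg (h x₂ hx₂)
end
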